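/- Fix a positive integer q. Let p be a positive integer and g_0, …, g_{p−1} polynomials with rational coefficients such that u_P(q;n) = g_{n mod p}(n) for every integer n ≥ 0. The symmetric group S_q acts on (ℝ²)^q by permuting the q coordinate pairs; this action preserves (B°)^q and the move arrangement, hence permutes the connected components of (B°)^q \ ⋃A_P^q. Then the number of S_q-orbits of these components (the number of unlabelled nonattacking configuration types of q pieces) equals g_{p−1}(−1). -/

import Mathlib

open MeasureTheory Pointwise

/-!
The move hyperplanes cut the configuration space `(B°)^q` into open convex polytopes, the cells, on
each of which every attack functional orders the pieces in a fixed way. The cells are the connected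
components, and labelling the pieces by increasing value of one attack functional picks exactly one
cell out of each `S_q`-orbit. The same labelling turns the placements on the lattice points of
`t B°` into the lattice points of the `t`-th dilates of these sorted cells. By Ehrhart–Macdonald
reciprocity the number of lattice points of the `t`-th dilate of an open rational polytope of
dimension `d` is, for `t ≥ 1`, a quasi-polynomial in `t` with value `(-1) ^ d` at `t = 0`. Here
`d = 2 q` is even, so that at `t = n + 1 = 0` each sorted cell contributes `1`.

Reciprocity at `t = 0` is proved by induction on the dimension, for sums of a quasi-polynomial
weight over the lattice points: cutting along hyperplanes reduces it to polytopes whose upper and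
lower bounds for one coordinate are given by a single form each, and summation over that coordinate
again gives a quasi-polynomial weight.
-/

namespace NonattackingPieces

/-! ### Quasi-polynomials on abelian groups -/

section QuasiPolynomial

variable {G G' H : Type*} [AddCommGroup G] [AddCommGroup G'] [AddCommGroup H]

/-- Invariance of a rational-valued function under the subgroup `N • G` for some `N > 0`. -/
def IsPeriodic (f : G → ℚ) : Prop :=
  ∃ N : ℕ, 0 < N ∧ ∀ x v : G, f (x + N • v) = f x

variable (G) in
/-- The algebra of quasi-polynomials on an abelian group, generated by the integral linear
functionals and the periodic functions. For `G = ℤ` these are the usual quasi-polynomials; the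
general case serves as weights on families of lattice points. -/
def quasiPolynomial : Subalgebra ℚ (G → ℚ) :=
  Algebra.adjoin ℚ ({f | ∃ φ : G →+ ℤ, f = fun x => (φ x : ℚ)} ∪ {f | IsPeriodic f})

lemma addMonoidHom_mem_quasiPolynomial (φ : G →+ ℤ) : (fun x => (φ x : ℚ)) ∈ quasiPolynomial G :=
  Algebra.subset_adjoin (Or.inl ⟨φ, rfl⟩)

lemma IsPeriodic.mem_quasiPolynomial {f : G → ℚ} (hf : IsPeriodic f) : f ∈ quasiPolynomial G :=
  Algebra.subset_adjoin (Or.inr hf)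

lemma const_mem_quasiPolynomial (c : ℚ) : (fun _ => c) ∈ quasiPolynomial G :=
  (quasiPolynomial G).algebraMap_mem c

lemma IsPeriodic.mul {f g : G → ℚ} (hf : IsPeriodic f) (hg : IsPeriodic g) :
    IsPeriodic (f * g) := by
  obtain ⟨N, hN, hf⟩ := hf
  obtain ⟨N', hN', hg⟩ := hg
  refine ⟨N * N', by positivity, fun x v => ?_⟩
  have hf' : f (x + (N * N') • v) = f x := by rw [mul_smul, hf]
  have hg' : g (x + (N * N') • v) = g x := by rw [mul_comm, mul_smul, hg]
  rw [Pi.mul_apply, hf', hg', Pi.mul_apply]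

lemma isPeriodic_emod {N : ℕ} (hN : 0 < N) (φ : G →+ ℤ) (e : ℤ) (F : ℤ → ℚ) :
    IsPeriodic fun x => F ((φ x + e) % N) := by
  refine ⟨N, hN, fun x v => ?_⟩
  beta_reduce
  rw [map_add, map_nsmul, nsmul_eq_mul, add_right_comm, Int.add_mul_emod_self_left]

lemma comp_mem_quasiPolynomial (L : G → G')
    (hL_linear : ∀ φ : G' →+ ℤ, (fun x => (φ (L x) : ℚ)) ∈ quasiPolynomial G)
    (hL_periodic : ∀ N' : ℕ, 0 < N' →
      ∃ N : ℕ, 0 < N ∧ ∀ x v, ∃ v', L (x + N • v) = L x + N' • v')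
    {f : G' → ℚ} (hf : f ∈ quasiPolynomial G') : (fun x => f (L x)) ∈ quasiPolynomial G := by
  induction hf using Algebra.adjoin_induction with
  | mem f hf =>
    rcases hf with ⟨φ, rfl⟩ | ⟨N', hN', hf⟩
    · exact hL_linear φ
    · obtain ⟨N, hN, h⟩ := hL_periodic N' hN'
      refine IsPeriodic.mem_quasiPolynomial ⟨N, hN, fun x v => ?_⟩
      obtain ⟨v', hv'⟩ := h x v
      simp only [hv', hf]
  | algebraMap r => exact const_mem_quasiPolynomial r
  | add f g _ _ hf hg => exact add_mem hf hg
  | mul f g _ _ hf hg => exact mul_mem hf hg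

lemma comp_affine_mem_quasiPolynomial (L : G →+ G') (c : G') {f : G' → ℚ}
    (hf : f ∈ quasiPolynomial G') : (fun x => f (L x + c)) ∈ quasiPolynomial G := by
  refine comp_mem_quasiPolynomial (fun x => L x + c) (fun φ => ?_)
    (fun N hN => ⟨N, hN, fun x v => ⟨L v, by rw [map_add, map_nsmul, add_right_comm]⟩⟩) hf
  convert add_mem (addMonoidHom_mem_quasiPolynomial (φ.comp L))
    (const_mem_quasiPolynomial (φ c : ℚ)) using 1
  funext x
  simp

lemma comp_addMonoidHom_mem_quasiPolynomial (L : G →+ G') {f : G' → ℚ}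
    (hf : f ∈ quasiPolynomial G') : (fun x => f (L x)) ∈ quasiPolynomial G := by
  simpa using comp_affine_mem_quasiPolynomial L 0 hf

lemma floor_mem_quasiPolynomial (φ : G →+ ℤ) (e : ℤ) {c : ℕ} (hc : 0 < c) :
    (fun x => (((φ x + e) / (c : ℤ) : ℤ) : ℚ)) ∈ quasiPolynomial G := by
  have h_emod := (isPeriodic_emod hc φ e fun r => (r : ℚ)).mem_quasiPolynomial
  convert mul_mem (sub_mem (add_mem (addMonoidHom_mem_quasiPolynomial φ)
    (const_mem_quasiPolynomial (e : ℚ))) h_emod) (const_mem_quasiPolynomial ((c : ℚ)⁻¹)) using 1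
  funext x
  have h_div : (((φ x + e) % (c : ℤ) : ℤ) : ℚ) + c * (((φ x + e) / (c : ℤ) : ℤ) : ℚ) = φ x + e :=
    mod_cast Int.emod_add_mul_ediv (φ x + e) c
  have hc' : (c : ℚ) ≠ 0 := by positivity
  simp only [Pi.mul_apply, Pi.sub_apply, Pi.add_apply]
  field_simp
  linarith

lemma addMonoidHom_prod_int_apply (φ : H × ℤ →+ ℤ) (x : H) (s : ℤ) :
    φ (x, s) = φ (x, 0) + s * φ (0, 1) := by
  have h_split : (x, s) = (x, 0) + s • ((0, 1) : H × ℤ) := by ext <;> simp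
  rw [h_split, map_add, map_zsmul, smul_eq_mul]

lemma subst_floor_mem_quasiPolynomial {A : H × ℤ → ℚ} (hA : A ∈ quasiPolynomial (H × ℤ))
    (φ : H →+ ℤ) (e : ℤ) {c : ℕ} (hc : 0 < c) :
    (fun x => A (x, (φ x + e) / (c : ℤ))) ∈ quasiPolynomial H := by
  refine comp_mem_quasiPolynomial (fun x => (x, (φ x + e) / (c : ℤ))) (fun ψ => ?_)
    (fun N' hN' => ⟨c * N', by positivity, fun x v => ⟨(c • v, φ v), ?_⟩⟩) hA
  · convert add_mem (addMonoidHom_mem_quasiPolynomial (ψ.comp (AddMonoidHom.inl H ℤ)))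
      (mul_mem (floor_mem_quasiPolynomial φ e hc)
        (const_mem_quasiPolynomial ((ψ (0, 1) : ℤ) : ℚ))) using 1
    funext x
    rw [addMonoidHom_prod_int_apply ψ]
    simp
  · have h_floor : φ (x + (c * N') • v) + e = φ x + e + (c : ℤ) * (N' * φ v) := by
      rw [map_add, map_nsmul, nsmul_eq_mul]
      push_cast
      ring
    ext
    · simp [mul_smul, mul_comm c N']
    · rw [h_floor, Int.add_mul_ediv_left _ _ (by positivity)]
      simp

lemma polynomial_mem_quasiPolynomial (P : Polynomial ℚ) (φ : G →+ ℤ) :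
    (fun x => P.eval (φ x : ℚ)) ∈ quasiPolynomial G := by
  simp only [Polynomial.eval_eq_sum_range]
  convert (quasiPolynomial G).sum_mem fun i (_ : i ∈ Finset.range (P.natDegree + 1)) =>
    mul_mem (const_mem_quasiPolynomial (P.coeff i))
      (pow_mem (addMonoidHom_mem_quasiPolynomial φ) i) using 1
  funext x
  simp

lemma exists_polynomial_sub_shift_eq_pow {N : ℕ} (hN : 0 < N) (k : ℕ) :
    ∃ P : Polynomial ℚ, ∀ s : ℚ, P.eval s - P.eval (s - N) = s ^ k := by
  refine ⟨Polynomial.C ((N : ℚ) ^ k / (k + 1)) *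
    (Polynomial.bernoulli (k + 1)).comp (1 + Polynomial.C (N : ℚ)⁻¹ * Polynomial.X), fun s => ?_⟩
  have hN' : (N : ℚ) ≠ 0 := by positivity
  have hk : (k : ℚ) + 1 ≠ 0 := by positivity
  have h_shift : 1 + (N : ℚ)⁻¹ * (s - N) = (N : ℚ)⁻¹ * s := by field_simp; ring
  simp only [Polynomial.eval_mul, Polynomial.eval_C, Polynomial.eval_comp, Polynomial.eval_add,
    Polynomial.eval_one, Polynomial.eval_X, h_shift, Polynomial.bernoulli_eval_one_add]
  rw [inv_mul_eq_div, div_pow]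
  push_cast
  field_simp
  ring

-- Summing a step-`N` antidifference over a full period gives a step-`1` antidifference.
lemma exists_antidifference_pow_mul_periodic (k : ℕ) {ψ : ℤ → ℚ} (hψ : IsPeriodic ψ) :
    ∃ A ∈ quasiPolynomial ℤ, ∀ s : ℤ, A s - A (s - 1) = (s : ℚ) ^ k * ψ s := by
  obtain ⟨N, hN, hψN⟩ := hψ
  obtain ⟨P, hP⟩ := exists_polynomial_sub_shift_eq_pow hN k
  let w : ℤ → ℚ := fun s => P.eval (s : ℚ) * ψ s
  have hw_mem : w ∈ quasiPolynomial ℤ :=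
    mul_mem (polynomial_mem_quasiPolynomial P (AddMonoidHom.id ℤ))
      (IsPeriodic.mem_quasiPolynomial ⟨N, hN, hψN⟩)
  have hw_diff (s : ℤ) : w s - w (s - N) = (s : ℚ) ^ k * ψ s := by
    have hψs : ψ (s - N) = ψ s := by simpa using (hψN (s - N) 1).symm
    simp only [w, hψs, ← hP, Int.cast_sub, Int.cast_natCast, sub_mul]
  refine ⟨∑ i ∈ Finset.range N, fun s => w (s + -(i : ℤ)), sum_mem fun i _ =>
    comp_affine_mem_quasiPolynomial (AddMonoidHom.id ℤ) (-(i : ℤ)) hw_mem, fun s => ?_⟩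
  have h_telescope := Finset.sum_range_sub' (fun i : ℕ => w (s + -(i : ℤ))) N
  simp only [Nat.cast_zero, neg_zero, add_zero, ← sub_eq_add_neg, hw_diff] at h_telescope
  simp only [Finset.sum_apply, ← h_telescope, ← Finset.sum_sub_distrib]
  refine Finset.sum_congr rfl fun i _ => ?_
  congr 2
  push_cast
  ring

variable (H) in
/-- The multiplicative monoid of functions `(x, s) ↦ f x * (s ^ k * ψ s)` on `H × ℤ`, with `f` a
quasi-polynomial and `ψ` periodic. It spans the quasi-polynomials on `H × ℤ`, and its elements
can be summed explicitly in the variable `s`. -/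
def separatedMonoid : Submonoid (H × ℤ → ℚ) where
  carrier := {F | ∃ f ∈ quasiPolynomial H, ∃ k : ℕ, ∃ ψ : ℤ → ℚ, IsPeriodic ψ ∧
    F = fun x => f x.1 * ((x.2 : ℚ) ^ k * ψ x.2)}
  one_mem' := ⟨1, one_mem _, 0, 1, ⟨1, one_pos, fun _ _ => rfl⟩, by funext x; simp⟩
  mul_mem' := by
    rintro _ _ ⟨f, hf, k, ψ, hψ, rfl⟩ ⟨g, hg, l, χ, hχ, rfl⟩
    refine ⟨f * g, mul_mem hf hg, k + l, ψ * χ, hψ.mul hχ, ?_⟩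
    funext x
    simp only [Pi.mul_apply]
    ring

lemma addMonoidHom_mem_span_separatedMonoid (φ : H × ℤ →+ ℤ) :
    (fun x => (φ x : ℚ)) ∈ Submodule.span ℚ (separatedMonoid H : Set (H × ℤ → ℚ)) := by
  have h_const : IsPeriodic (1 : ℤ → ℚ) := ⟨1, one_pos, fun _ _ => rfl⟩
  have h_split : (fun x : H × ℤ => (φ x : ℚ)) =
      (fun x => (φ (x.1, 0) : ℚ) * ((x.2 : ℚ) ^ 0 * (1 : ℤ → ℚ) x.2)) +
        fun x => ((φ (0, 1) : ℤ) : ℚ) * ((x.2 : ℚ) ^ 1 * (1 : ℤ → ℚ) x.2) := by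
    funext x
    have := addMonoidHom_prod_int_apply φ x.1 x.2
    simp [this, mul_comm]
  rw [h_split]
  exact add_mem
    (Submodule.subset_span ⟨_, addMonoidHom_mem_quasiPolynomial (φ.comp (AddMonoidHom.inl H ℤ)),
      0, 1, h_const, rfl⟩)
    (Submodule.subset_span ⟨_, const_mem_quasiPolynomial _, 1, 1, h_const, rfl⟩)

lemma IsPeriodic.mem_span_separatedMonoid {f : H × ℤ → ℚ} (hf : IsPeriodic f) :
    f ∈ Submodule.span ℚ (separatedMonoid H : Set (H × ℤ → ℚ)) := by
  obtain ⟨N, hN, hf⟩ := hf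
  let χ (r : ℕ) (s : ℤ) : ℚ := if s % N = r then 1 else 0
  have h_split : f = ∑ r ∈ Finset.range N, fun x : H × ℤ =>
      f (x.1, (r : ℤ)) * ((x.2 : ℚ) ^ 0 * χ r x.2) := by
    funext ⟨y, s⟩
    obtain ⟨r, hr⟩ := Int.eq_ofNat_of_zero_le (Int.emod_nonneg s (by positivity : (N : ℤ) ≠ 0))
    have hr_lt : r < N := by exact_mod_cast hr ▸ Int.emod_lt_of_pos s (by positivity : (0 : ℤ) < N)
    have h_residue : f (y, s) = f (y, (r : ℤ)) := by
      rw [← hf (y, (r : ℤ)) (0, s / N)]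
      congr 1
      ext
      · simp
      · simpa [hr] using (Int.emod_add_mul_ediv s N).symm
    simp [χ, hr, h_residue, hr_lt]
  rw [h_split]
  refine sum_mem fun r _ => Submodule.subset_span ⟨fun y => f (y, (r : ℤ)),
    IsPeriodic.mem_quasiPolynomial ⟨N, hN, fun y v => ?_⟩, 0, χ r, ?_, rfl⟩
  · simpa using hf (y, (r : ℤ)) (v, 0)
  · simpa using isPeriodic_emod hN (AddMonoidHom.id ℤ) 0 fun t => if t = r then 1 else 0

lemma quasiPolynomial_prod_int_le_span_separatedMonoid {w : H × ℤ → ℚ}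
    (hw : w ∈ quasiPolynomial (H × ℤ)) :
    w ∈ Submodule.span ℚ (separatedMonoid H : Set (H × ℤ → ℚ)) := by
  rw [← Submonoid.closure_eq (separatedMonoid H), ← Algebra.adjoin_eq_span]
  refine Algebra.adjoin_le ?_ hw
  rintro f (⟨φ, rfl⟩ | hf)
  · exact Algebra.span_le_adjoin ℚ _ (addMonoidHom_mem_span_separatedMonoid φ)
  · exact Algebra.span_le_adjoin ℚ _ hf.mem_span_separatedMonoid

lemma exists_antidifference {w : H × ℤ → ℚ} (hw : w ∈ quasiPolynomial (H × ℤ)) :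
    ∃ A ∈ quasiPolynomial (H × ℤ), ∀ h s, A (h, s) - A (h, s - 1) = w (h, s) := by
  have hw' := quasiPolynomial_prod_int_le_span_separatedMonoid hw
  clear hw
  induction hw' using Submodule.span_induction with
  | mem F hF =>
    obtain ⟨f, hf, k, ψ, hψ, rfl⟩ := hF
    obtain ⟨A, hA, hA_diff⟩ := exists_antidifference_pow_mul_periodic k hψ
    refine ⟨_, mul_mem (comp_addMonoidHom_mem_quasiPolynomial (AddMonoidHom.fst H ℤ) hf)
      (comp_addMonoidHom_mem_quasiPolynomial (AddMonoidHom.snd H ℤ) hA), fun h s => ?_⟩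
    simp [← hA_diff, mul_sub]
  | zero => exact ⟨0, zero_mem _, by simp⟩
  | add f g _ _ ihf ihg =>
    obtain ⟨A, hA, hA_diff⟩ := ihf
    obtain ⟨A', hA', hA'_diff⟩ := ihg
    refine ⟨A + A', add_mem hA hA', fun h s => ?_⟩
    simp only [Pi.add_apply, ← hA_diff, ← hA'_diff]
    ring
  | smul c f _ ihf =>
    obtain ⟨A, hA, hA_diff⟩ := ihf
    refine ⟨c • A, (quasiPolynomial _).smul_mem hA c, fun h s => ?_⟩
    simp only [Pi.smul_apply, smul_eq_mul, ← hA_diff, mul_sub]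

lemma exists_polynomial_on_common_multiples {f g : ℤ → ℚ}
    (hf : ∃ N : ℕ, 0 < N ∧ ∃ P : Polynomial ℚ, ∀ t : ℤ, f (N * t) = P.eval (t : ℚ))
    (hg : ∃ N : ℕ, 0 < N ∧ ∃ P : Polynomial ℚ, ∀ t : ℤ, g (N * t) = P.eval (t : ℚ)) :
    ∃ N : ℕ, 0 < N ∧ ∃ P Q : Polynomial ℚ,
      ∀ t : ℤ, f (N * t) = P.eval (t : ℚ) ∧ g (N * t) = Q.eval (t : ℚ) := by
  obtain ⟨N, hN, P, hP⟩ := hf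
  obtain ⟨N', hN', Q, hQ⟩ := hg
  refine ⟨N * N', by positivity, P.comp (Polynomial.C (N' : ℚ) * Polynomial.X),
    Q.comp (Polynomial.C (N : ℚ) * Polynomial.X), fun t => ⟨?_, ?_⟩⟩
  · have := hP (N' * t)
    rw [← mul_assoc] at this
    simpa using this
  · have := hQ (N * t)
    rw [← mul_assoc, mul_comm (N' : ℤ)] at this
    simpa using this

lemma exists_polynomial_on_multiples {W : ℤ → ℚ} (hW : W ∈ quasiPolynomial ℤ) :
    ∃ N : ℕ, 0 < N ∧ ∃ P : Polynomial ℚ, ∀ t : ℤ, W (N * t) = P.eval (t : ℚ) := by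
  induction hW using Algebra.adjoin_induction with
  | mem f hf =>
    rcases hf with ⟨φ, rfl⟩ | ⟨N, hN, hf⟩
    · refine ⟨1, one_pos, Polynomial.C (φ 1 : ℚ) * Polynomial.X, fun t => ?_⟩
      have hφ : φ t = t * φ 1 := by simpa using map_zsmul φ t 1
      simp [hφ, mul_comm]
    · refine ⟨N, hN, Polynomial.C (f 0), fun t => ?_⟩
      simpa using hf 0 t
  | algebraMap r => exact ⟨1, one_pos, Polynomial.C r, fun t => by simp⟩
  | add f g _ _ hf hg =>
    obtain ⟨N, hN, P, Q, h⟩ := exists_polynomial_on_common_multiples hf hg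
    exact ⟨N, hN, P + Q, fun t => by simp [h t]⟩
  | mul f g _ _ hf hg =>
    obtain ⟨N, hN, P, Q, h⟩ := exists_polynomial_on_common_multiples hf hg
    exact ⟨N, hN, P * Q, fun t => by simp [h t]⟩

-- Along `n + 1 = N * p * s` both sides of `hWg` are polynomials in `s`; evaluate them at `s = 0`.
lemma quasiPolynomial_apply_zero_eq_eval_neg_one {W : ℤ → ℚ} (hW : W ∈ quasiPolynomial ℤ)
    {p : ℕ} (hp : 0 < p) {g : ℕ → Polynomial ℚ}
    (hWg : ∀ n : ℕ, W (n + 1) = (g (n % p)).eval (n : ℚ)) :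
    W 0 = (g (p - 1)).eval (-1) := by
  obtain ⟨N, hN, P, hP⟩ := exists_polynomial_on_multiples hW
  have h_eq : P.comp (Polynomial.C (p : ℚ) * Polynomial.X) =
      (g (p - 1)).comp (Polynomial.C (N * p : ℚ) * Polynomial.X - 1) := by
    refine Polynomial.eq_of_infinite_eval_eq _ _ (Set.infinite_of_injective_forall_mem
      (f := fun k : ℕ => (k : ℚ) + 1) (fun a b hab => by simpa using hab) fun k => ?_)
    obtain ⟨j, hj⟩ : ∃ j, N * (k + 1) = j + 1 := Nat.exists_eq_succ_of_ne_zero (by positivity)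
    have hj_int : (N : ℤ) * (k + 1) = j + 1 := mod_cast hj
    have hj_rat : (N : ℚ) * (k + 1) = j + 1 := mod_cast hj
    have hWn := hWg (p * j + (p - 1))
    rw [Nat.mul_add_mod, Nat.mod_eq_of_lt (by omega)] at hWn
    have h_int : ((p * j + (p - 1) : ℕ) : ℤ) + 1 = N * (p * (k + 1)) := by
      push_cast [Nat.cast_sub hp]
      linear_combination -(p : ℤ) * hj_int
    have h_rat : ((p * j + (p - 1) : ℕ) : ℚ) = N * p * (k + 1) - 1 := by
      push_cast [Nat.cast_sub hp]
      linear_combination -(p : ℚ) * hj_rat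
    rw [h_int, hP, h_rat] at hWn
    simpa using hWn
  have h_zero := congrArg (Polynomial.eval 0) h_eq
  have hP_zero := hP 0
  simp only [mul_zero, Int.cast_zero] at hP_zero
  simpa [← hP_zero] using h_zero

end QuasiPolynomial

/-! ### Open polytopes given by integral forms, and their dilates -/

section OpenPolytope

variable {ι : Type*} [Fintype ι] {R : Type*}

/-- An integral linear form `∑ i, C.1 i * x i + C.2 * t` in a point `x` and a dilation factor `t`,
encoded by its coefficients. -/
abbrev IntForm (ι : Type*) := (ι → ℤ) × ℤ

variable (R) in
/-- Evaluation of an integral linear form at `(x, t)`, with entries in any commutative ring. -/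
def formEval [CommRing R] : IntForm ι →+ ((ι → R) × R →ₗ[R] R) where
  toFun C := (∑ i, (C.1 i : R) • LinearMap.proj i).coprod ((C.2 : R) • LinearMap.id)
  map_zero' := by ext <;> simp
  map_add' C D := by ext <;> simp [add_smul, Finset.sum_add_distrib]

lemma formEval_apply [CommRing R] (C : IntForm ι) (x : ι → R) (t : R) :
    formEval R C (x, t) = ∑ i, (C.1 i : R) * x i + C.2 * t := by
  simp [formEval]

lemma formEval_zsmul_apply [CommRing R] (c : ℤ) (C : IntForm ι) (z : (ι → R) × R) :
    formEval R (c • C) z = c * formEval R C z := by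
  rw [map_zsmul, LinearMap.smul_apply, zsmul_eq_mul]

lemma formEval_smul_apply [CommRing R] (C : IntForm ι) (c : R) (x : ι → R) (t : R) :
    formEval R C (c • x, c * t) = c * formEval R C (x, t) := by
  rw [← smul_eq_mul, ← Prod.smul_mk, map_smul, smul_eq_mul]

lemma formEval_intCast (C : IntForm ι) (x : ι → ℤ) (t : ℤ) :
    formEval ℝ C (fun i => (x i : ℝ), (t : ℝ)) = (formEval ℤ C (x, t) : ℤ) := by
  simp [formEval_apply]

lemma formEval_eq_of_fst_eq_zero [CommRing R] {C : IntForm ι} (hC : C.1 = 0) (x : ι → R) (t : R) :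
    formEval R C (x, t) = C.2 * t := by
  simp [formEval_apply, hC]

/-- The `t`-th dilate of the open polytope cut out by the strict inequalities `0 < C`, `C ∈ Cs`.
Over `ℤ` this is the set of its lattice points. -/
def openPolytope [CommRing R] [LT R] (Cs : Finset (IntForm ι)) (t : R) : Set (ι → R) :=
  {x | ∀ C ∈ Cs, 0 < formEval R C (x, t)}

lemma openPolytope_insert [CommRing R] [LT R] [DecidableEq (IntForm ι)]
    (C : IntForm ι) (Cs : Finset (IntForm ι)) (t : R) :
    openPolytope (insert C Cs) t = openPolytope Cs t ∩ {x | 0 < formEval R C (x, t)} := by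
  ext x
  exact (Finset.forall_mem_insert _ _ _).trans and_comm

lemma openPolytope_insert_neg [CommRing R] [LinearOrder R]
    [IsStrictOrderedRing R] [DecidableEq (IntForm ι)] (C : IntForm ι) (Cs : Finset (IntForm ι))
    (t : R) :
    openPolytope (insert (-C) Cs) t = openPolytope Cs t ∩ {x | formEval R C (x, t) < 0} := by
  simp only [openPolytope_insert, map_neg, LinearMap.neg_apply, neg_pos]

lemma inv_smul_intCast_mem_openPolytope_iff {Cs : Finset (IntForm ι)} {x : ι → ℤ} {t : ℤ}
    (ht : 1 ≤ t) :
    (t : ℝ)⁻¹ • (fun i => (x i : ℝ)) ∈ openPolytope Cs (1 : ℝ) ↔ x ∈ openPolytope Cs t := by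
  have ht' : (0 : ℝ) < t := by exact_mod_cast (by omega : 0 < t)
  refine forall₂_congr fun C _ => ?_
  rw [← inv_mul_cancel₀ ht'.ne', formEval_smul_apply, formEval_intCast,
    mul_pos_iff_of_pos_left (inv_pos.2 ht'), Int.cast_pos]

lemma finite_openPolytope {Cs : Finset (IntForm ι)}
    (hb : Bornology.IsBounded (openPolytope Cs (1 : ℝ))) {t : ℤ} (ht : 1 ≤ t) :
    (openPolytope Cs t).Finite := by
  obtain ⟨b, hb⟩ := hb.exists_norm_le
  have ht' : (0 : ℝ) < t := by exact_mod_cast (by omega : 0 < t)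
  refine (isCompact_closedBall (0 : ι → ℤ) (t * b)).finite_of_discrete.subset fun x hx => ?_
  have h_norm : ‖fun i => (x i : ℝ)‖ = ‖x‖ := by
    simp only [Pi.norm_def, ← norm_toNNReal, Int.norm_cast_real]
  have h_le := hb _ ((inv_smul_intCast_mem_openPolytope_iff ht).2 hx)
  rw [norm_smul, norm_inv, Real.norm_of_nonneg ht'.le, h_norm, inv_mul_le_iff₀ ht'] at h_le
  exact mem_closedBall_zero_iff.2 h_le

lemma isOpenMap_formEval {C : IntForm ι} (hC : C.1 ≠ 0) :
    IsOpenMap fun x : ι → ℝ => formEval ℝ C (x, 1) := by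
  have h_ne : formEval ℝ C ∘ₗ LinearMap.inl ℝ (ι → ℝ) ℝ ≠ 0 := by
    classical
    obtain ⟨k, hk⟩ := Function.ne_iff.1 hC
    intro h
    have hk_zero := LinearMap.congr_fun h (Pi.single k 1)
    exact hk (by simpa [formEval_apply, Pi.single_apply] using hk_zero)
  have h_open := LinearMap.isOpenMap_of_finiteDimensional _ (LinearMap.surjective h_ne)
  convert (Homeomorph.addRight (C.2 : ℝ)).isOpenMap.comp h_open using 2 with x
  simp [formEval_apply]

lemma continuous_formEval (C : IntForm ι) :
    Continuous fun x : ι → ℝ => formEval ℝ C (x, 1) := by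
  simp only [formEval_apply]
  fun_prop

lemma isOpen_openPolytope (Cs : Finset (IntForm ι)) : IsOpen (openPolytope Cs (1 : ℝ)) := by
  simp only [openPolytope, Set.ofPred_forall]
  exact isOpen_biInter_finset fun C _ => isOpen_lt continuous_const (continuous_formEval C)

lemma convex_openPolytope (Cs : Finset (IntForm ι)) : Convex ℝ (openPolytope Cs (1 : ℝ)) := by
  intro x hx y hy a b ha hb hab C hC
  have h_comb : (a • x + b • y, (1 : ℝ)) = a • (x, (1 : ℝ)) + b • (y, (1 : ℝ)) := by
    simp [hab]
  rw [h_comb, map_add, map_smul, map_smul]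
  exact convex_Ioi (0 : ℝ) (hx C hC) (hy C hC) ha hb hab

open Classical in
/-- The compactly supported Euler characteristic of a `d`-dimensional open polytope, which is
`(-1) ^ d` if the polytope is nonempty. -/
noncomputable def openEuler {E : Type*} (d : ℕ) (S : Set E) : ℚ :=
  if S.Nonempty then (-1) ^ d else 0

lemma openEuler_of_nonempty {E : Type*} (d : ℕ) {S : Set E} (hS : S.Nonempty) :
    openEuler d S = (-1) ^ d :=
  if_pos hS

lemma openEuler_empty {E : Type*} (d : ℕ) : openEuler d (∅ : Set E) = 0 :=
  if_neg Set.not_nonempty_empty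

lemma openEuler_succ {E : Type*} (d : ℕ) (S : Set E) : openEuler (d + 1) S = -openEuler d S := by
  simp [openEuler, pow_succ, apply_ite]

lemma openEuler_congr {E E' : Type*} (d : ℕ) {S : Set E} {S' : Set E'}
    (h : S.Nonempty ↔ S'.Nonempty) : openEuler d S = openEuler d S' := by
  classical exact if_congr h rfl rfl

end OpenPolytope

section WeightedCount

variable {ι ι' : Type*}

/-- For `t ≥ 1` the sum of `w (·, t)` over `A t` is a quasi-polynomial in `t`, whose value at
`t = 0` is `e`. -/
def HasWeightedCount (A : ℤ → Set (ι → ℤ)) (w : IntForm ι → ℚ) (e : ℚ) : Prop :=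
  ∃ W ∈ quasiPolynomial ℤ, (∀ t : ℤ, 1 ≤ t → ∑ᶠ x ∈ A t, w (x, t) = W t) ∧ W 0 = e

lemma HasWeightedCount.congr {A : ℤ → Set (ι → ℤ)} {A' : ℤ → Set (ι' → ℤ)}
    {w : IntForm ι → ℚ} {w' : IntForm ι' → ℚ} {e : ℚ}
    (h : HasWeightedCount A w e)
    (h_sum : ∀ t : ℤ, 1 ≤ t → ∑ᶠ x ∈ A' t, w' (x, t) = ∑ᶠ x ∈ A t, w (x, t)) :
    HasWeightedCount A' w' e := by
  obtain ⟨W, hW, hW_sum, hW_zero⟩ := h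
  exact ⟨W, hW, fun t ht => (h_sum t ht).trans (hW_sum t ht), hW_zero⟩

lemma hasWeightedCount_zero_of_forall_eq_empty {A : ℤ → Set (ι → ℤ)} (w : IntForm ι → ℚ)
    (hA : ∀ t, 1 ≤ t → A t = ∅) : HasWeightedCount A w 0 :=
  ⟨0, zero_mem _, fun t ht => by simp [hA t ht], rfl⟩

lemma HasWeightedCount.union {A A' : ℤ → Set (ι → ℤ)} {w : IntForm ι → ℚ} {e e' : ℚ}
    (h : HasWeightedCount A w e) (h' : HasWeightedCount A' w e')
    (h_disj : ∀ t, Disjoint (A t) (A' t)) (h_fin : ∀ t, 1 ≤ t → (A t ∪ A' t).Finite) :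
    HasWeightedCount (fun t => A t ∪ A' t) w (e + e') := by
  obtain ⟨W, hW, hW_sum, rfl⟩ := h
  obtain ⟨W', hW', hW'_sum, rfl⟩ := h'
  refine ⟨W + W', add_mem hW hW', fun t ht => ?_, rfl⟩
  rw [finsum_mem_union (h_disj t) ((h_fin t ht).subset Set.subset_union_left)
    ((h_fin t ht).subset Set.subset_union_right), hW_sum t ht, hW'_sum t ht, Pi.add_apply]

end WeightedCount

/-! ### Cutting an open polytope along a hyperplane -/

section Cut

variable {d : ℕ}

/-- Ehrhart–Macdonald reciprocity at dilation `0` for the open polytope cut out by `Cs`, for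
arbitrary quasi-polynomial weights. -/
def Reciprocity (Cs : Finset (IntForm (Fin d))) : Prop :=
  ∀ w ∈ quasiPolynomial (IntForm (Fin d)), HasWeightedCount (openPolytope Cs) w
    (openEuler d (openPolytope Cs (1 : ℝ)) * w 0)

lemma reciprocity_of_eq_empty {Cs : Finset (IntForm (Fin d))}
    (h_empty : openPolytope Cs (1 : ℝ) = ∅) : Reciprocity Cs := by
  intro w _
  rw [h_empty, openEuler_empty, zero_mul]
  exact hasWeightedCount_zero_of_forall_eq_empty w fun t ht => Set.eq_empty_of_forall_notMem
    fun x hx => h_empty.subset ((inv_smul_intCast_mem_openPolytope_iff ht).2 hx)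

lemma openEuler_add_openEuler_add_openEuler {E : Type*} [TopologicalSpace E] {U : Set E}
    (hU : IsPreconnected U) {f : E → ℝ} (hf : Continuous f)
    (h_cross : (U ∩ {x | f x = 0}).Nonempty →
      (U ∩ {x | 0 < f x}).Nonempty ∧ (U ∩ {x | f x < 0}).Nonempty) (d : ℕ) :
    openEuler (d + 1) (U ∩ {x | 0 < f x}) + openEuler (d + 1) (U ∩ {x | f x < 0}) +
      openEuler d (U ∩ {x | f x = 0}) = openEuler (d + 1) U := by
  by_cases h_zero : (U ∩ {x | f x = 0}).Nonempty
  · obtain ⟨h_pos, h_neg⟩ := h_cross h_zero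
    rw [openEuler_of_nonempty _ h_pos, openEuler_of_nonempty _ h_neg,
      openEuler_of_nonempty _ h_zero, openEuler_of_nonempty _ (h_pos.mono Set.inter_subset_left)]
    ring
  have h_ne : ∀ x ∈ U, f x ≠ 0 := fun x hx hfx => h_zero ⟨x, hx, hfx⟩
  rw [Set.not_nonempty_iff_eq_empty.1 h_zero, openEuler_empty, add_zero]
  by_cases h_pos : ∃ x ∈ U, 0 < f x
  · obtain ⟨x, hx, hfx⟩ := h_pos
    have h_all : ∀ y ∈ U, 0 < f y := by
      intro y hy
      by_contra! hfy
      obtain ⟨z, hz, hfz⟩ := hU.intermediate_value hy hx hf.continuousOn ⟨hfy, hfx.le⟩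
      exact h_ne z hz hfz
    have h_left : U ∩ {x | 0 < f x} = U := Set.inter_eq_left.2 h_all
    have h_right : U ∩ {x | f x < 0} = ∅ :=
      Set.disjoint_left.2 (fun y hy => (h_all y hy).not_gt) |>.inter_eq
    rw [h_left, h_right, openEuler_empty, add_zero]
  · push Not at h_pos
    have h_left : U ∩ {x | 0 < f x} = ∅ :=
      Set.disjoint_left.2 (fun y hy => (h_pos y hy).not_gt) |>.inter_eq
    have h_right : U ∩ {x | f x < 0} = U :=
      Set.inter_eq_left.2 fun y hy => (h_pos y hy).lt_of_ne (h_ne y hy)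
    rw [h_left, h_right, openEuler_empty, zero_add]

lemma nonempty_inter_pos_and_neg {ι : Type*} [Fintype ι] {U : Set (ι → ℝ)} (hU : IsOpen U)
    {h : IntForm ι} (hh : h ≠ 0) (h_zero : (U ∩ {x | formEval ℝ h (x, 1) = 0}).Nonempty) :
    (U ∩ {x | 0 < formEval ℝ h (x, 1)}).Nonempty ∧
      (U ∩ {x | formEval ℝ h (x, 1) < 0}).Nonempty := by
  obtain ⟨x, hx, hx_zero⟩ := h_zero
  have h_fst : h.1 ≠ 0 := by
    intro h_fst
    have h_snd : (h.2 : ℝ) = 0 := by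
      simpa [formEval_eq_of_fst_eq_zero h_fst] using hx_zero
    exact hh (Prod.ext h_fst (by exact_mod_cast h_snd))
  have h_nhds := (isOpenMap_formEval h_fst U hU).mem_nhds (Set.mem_image_of_mem _ hx)
  rw [show formEval ℝ h (x, 1) = 0 from hx_zero] at h_nhds
  obtain ⟨_, h_pos, y, hy, rfl⟩ := Filter.Eventually.exists_gt h_nhds
  obtain ⟨_, h_neg, z, hz, rfl⟩ := Filter.Eventually.exists_lt h_nhds
  exact ⟨⟨y, hy, h_pos⟩, z, hz, h_neg⟩

lemma reciprocity_of_cut {Cs : Finset (IntForm (Fin (d + 1)))}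
    (hb : Bornology.IsBounded (openPolytope Cs (1 : ℝ))) {h : IntForm (Fin (d + 1))} (hh : h ≠ 0)
    (h_pos : Reciprocity (insert h Cs)) (h_neg : Reciprocity (insert (-h) Cs))
    (h_zero : ∀ w ∈ quasiPolynomial (IntForm (Fin (d + 1))),
      HasWeightedCount (fun t => openPolytope Cs t ∩ {x | formEval ℤ h (x, t) = 0}) w
        (openEuler d (openPolytope Cs (1 : ℝ) ∩ {x | formEval ℝ h (x, 1) = 0}) * w 0)) :
    Reciprocity Cs := by
  intro w hw
  have h_split (t : ℤ) : openPolytope (insert h Cs) t ∪ openPolytope (insert (-h) Cs) t ∪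
      (openPolytope Cs t ∩ {x | formEval ℤ h (x, t) = 0}) = openPolytope Cs t := by
    rw [openPolytope_insert, openPolytope_insert_neg, ← Set.inter_union_distrib_left,
      ← Set.inter_union_distrib_left, Set.inter_eq_left]
    intro x _
    rcases lt_trichotomy (formEval ℤ h (x, t)) 0 with hx | hx | hx <;> simp [hx]
  have h_fin (t : ℤ) (ht : 1 ≤ t) := finite_openPolytope hb ht
  have h_pos_neg := (h_pos w hw).union (h_neg w hw)
    (fun t => by
      rw [openPolytope_insert, openPolytope_insert_neg]
      exact Set.disjoint_left.2 fun x ⟨_, (hx : 0 < formEval ℤ h (x, t))⟩ hx' => hx.not_gt hx'.2)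
    (fun t ht => (h_fin t ht).subset (Set.subset_union_left.trans (h_split t).subset))
  have h_sum := h_pos_neg.union (h_zero w hw)
    (fun t => by
      rw [openPolytope_insert, openPolytope_insert_neg, ← Set.inter_union_distrib_left]
      exact Set.disjoint_left.2 fun x hx ⟨_, (hx' : formEval ℤ h (x, t) = 0)⟩ => hx.2.elim
        (fun hx => hx.ne' hx') fun hx => hx.ne hx')
    (fun t ht => (h_split t).symm ▸ h_fin t ht)
  simp only [h_split, openPolytope_insert_neg (R := ℝ), openPolytope_insert (R := ℝ) h,
    ← add_mul] at h_sum
  rwa [openEuler_add_openEuler_add_openEuler (convex_openPolytope Cs).isPreconnected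
    (continuous_formEval h) (nonempty_inter_pos_and_neg (isOpen_openPolytope Cs) hh)] at h_sum

end Cut

/-! ### Slicing an open polytope by a hyperplane -/

section Slice

variable {d : ℕ} {R : Type*}

/-- The restriction of an integral form to the hyperplane on which the `k`-th coordinate of `x`
vanishes. -/
def deleteCoord (k : Fin (d + 1)) (C : IntForm (Fin (d + 1))) : IntForm (Fin d) :=
  (k.removeNth C.1, C.2)

/-- The multiple of `C` by the `k`-th coefficient of `h`, with its `k`-th variable eliminated by
means of the equation `h = 0`. -/
def eliminateCoord (k : Fin (d + 1)) (h C : IntForm (Fin (d + 1))) : IntForm (Fin d) :=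
  h.1 k • deleteCoord k C - C.1 k • deleteCoord k h

lemma formEval_insertNth [CommRing R] (C : IntForm (Fin (d + 1))) (k : Fin (d + 1)) (s : R)
    (y : Fin d → R) (t : R) :
    formEval R C (k.insertNth s y, t) = C.1 k * s + formEval R (deleteCoord k C) (y, t) := by
  simp [formEval_apply, deleteCoord, Fin.sum_univ_succAbove _ k, Fin.removeNth, add_assoc]

lemma formEval_eliminateCoord [CommRing R] (k : Fin (d + 1)) (h C : IntForm (Fin (d + 1)))
    {s : R} {y : Fin d → R} {t : R} (h_zero : formEval R h (k.insertNth s y, t) = 0) :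
    formEval R (eliminateCoord k h C) (y, t) =
      h.1 k * formEval R C (k.insertNth s y, t) := by
  rw [formEval_insertNth] at h_zero ⊢
  rw [eliminateCoord, map_sub, LinearMap.sub_apply, formEval_zsmul_apply, formEval_zsmul_apply]
  linear_combination (-(C.1 k : R)) * h_zero

lemma mem_openPolytope_eliminateCoord [CommRing R] [LinearOrder R] [IsStrictOrderedRing R]
    {k : Fin (d + 1)} {h : IntForm (Fin (d + 1))} (hk : 0 < h.1 k)
    (Cs : Finset (IntForm (Fin (d + 1)))) {s : R} {y : Fin d → R} {t : R}
    (h_zero : formEval R h (k.insertNth s y, t) = 0) :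
    y ∈ openPolytope (Cs.image (eliminateCoord k h)) t ↔
      (k.insertNth s y : Fin (d + 1) → R) ∈ openPolytope Cs t := by
  have hk' : (0 : R) < h.1 k := by exact_mod_cast hk
  simp only [openPolytope, Finset.forall_mem_image, Set.mem_ofPred_eq,
    formEval_eliminateCoord k h _ h_zero, mul_pos_iff_of_pos_left hk']

lemma removeNth_image_slice {k : Fin (d + 1)} {h : IntForm (Fin (d + 1))} (hk : 0 < h.1 k)
    (Cs : Finset (IntForm (Fin (d + 1)))) :
    k.removeNth '' (openPolytope Cs (1 : ℝ) ∩ {x | formEval ℝ h (x, 1) = 0}) =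
      openPolytope (Cs.image (eliminateCoord k h)) (1 : ℝ) := by
  ext y
  constructor
  · rintro ⟨x, ⟨hx, hx_zero : formEval ℝ h (x, 1) = 0⟩, rfl⟩
    rw [← Fin.insertNth_self_removeNth k x] at hx hx_zero
    exact (mem_openPolytope_eliminateCoord hk Cs hx_zero).2 hx
  · intro hy
    have hk' : (h.1 k : ℝ) ≠ 0 := by exact_mod_cast hk.ne'
    have h_zero : formEval ℝ h
        (k.insertNth (-formEval ℝ (deleteCoord k h) (y, 1) / h.1 k) y, 1) = 0 := by
      rw [formEval_insertNth]
      field_simp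
      ring
    exact ⟨_, ⟨(mem_openPolytope_eliminateCoord hk Cs h_zero).1 hy, h_zero⟩,
      Fin.removeNth_insertNth _ _ _⟩

lemma isBounded_removeNth_image {S : Set (Fin (d + 1) → ℝ)} (hS : Bornology.IsBounded S)
    (k : Fin (d + 1)) : Bornology.IsBounded (k.removeNth '' S) := by
  rw [← Bornology.forall_isBounded_image_eval_iff] at hS ⊢
  intro i
  rw [Set.image_image]
  exact hS (k.succAbove i)

lemma removeNth_bijOn_slice {k : Fin (d + 1)} {h : IntForm (Fin (d + 1))} (hk : 0 < h.1 k)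
    (Cs : Finset (IntForm (Fin (d + 1)))) (t : ℤ) :
    Set.BijOn k.removeNth (openPolytope Cs t ∩ {x | formEval ℤ h (x, t) = 0})
      (openPolytope (Cs.image (eliminateCoord k h)) t ∩
        {y | h.1 k ∣ formEval ℤ (deleteCoord k h) (y, t)}) := by
  have h_eq_zero_iff (s : ℤ) (y : Fin d → ℤ) : formEval ℤ h (k.insertNth s y, t) = 0 ↔
      formEval ℤ (deleteCoord k h) (y, t) = h.1 k * -s := by
    rw [formEval_insertNth, Int.cast_id]
    constructor <;> intro h <;> linarith
  refine ⟨?_, ?_, ?_⟩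
  · rintro x ⟨hx, hx_zero : formEval ℤ h (x, t) = 0⟩
    rw [← Fin.insertNth_self_removeNth k x] at hx hx_zero
    exact ⟨(mem_openPolytope_eliminateCoord hk Cs hx_zero).2 hx,
      _, (h_eq_zero_iff _ _).1 hx_zero⟩
  · rintro x ⟨_, hx_zero : formEval ℤ h (x, t) = 0⟩ x' ⟨_, hx'_zero : formEval ℤ h (x', t) = 0⟩
      (hxx' : k.removeNth x = k.removeNth x')
    rw [← Fin.insertNth_self_removeNth k x, h_eq_zero_iff] at hx_zero
    rw [← Fin.insertNth_self_removeNth k x', h_eq_zero_iff, ← hxx', hx_zero] at hx'_zero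
    have h_coord : x k = x' k := neg_injective (mul_left_cancel₀ hk.ne' hx'_zero)
    rw [← Fin.insertNth_self_removeNth k x, h_coord, hxx', Fin.insertNth_self_removeNth]
  · rintro y ⟨hy, s, hs⟩
    have h_zero := (h_eq_zero_iff (-s) y).2 (by rw [hs, neg_neg])
    exact ⟨_, ⟨(mem_openPolytope_eliminateCoord hk Cs h_zero).1 hy, h_zero⟩,
      Fin.removeNth_insertNth _ _ _⟩

lemma comp_insertNth_mem_quasiPolynomial (k : Fin (d + 1)) {w : IntForm (Fin (d + 1)) → ℚ}
    (hw : w ∈ quasiPolynomial (IntForm (Fin (d + 1)))) :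
    (fun z : IntForm (Fin d) × ℤ => w (k.insertNth z.2 z.1.1, z.1.2)) ∈ quasiPolynomial _ := by
  let L : IntForm (Fin d) × ℤ →+ IntForm (Fin (d + 1)) :=
    AddMonoidHom.mk' (fun z => (k.insertNth z.2 z.1.1, z.1.2)) fun z z' => by
      simp only [Prod.fst_add, Prod.snd_add, Fin.insertNth_add, Prod.mk_add_mk]
  exact comp_addMonoidHom_mem_quasiPolynomial L hw

/-- The weight on `ℤ ^ d` that a weight `w` on the hyperplane `h = 0` of `ℤ ^ (d + 1)` induces by
projecting away the `k`-th coordinate. -/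
def sliceWeight (k : Fin (d + 1)) (h : IntForm (Fin (d + 1))) (w : IntForm (Fin (d + 1)) → ℚ)
    (z : IntForm (Fin d)) : ℚ :=
  (if h.1 k ∣ formEval ℤ (deleteCoord k h) z then 1 else 0) *
    w (k.insertNth (-formEval ℤ (deleteCoord k h) z / h.1 k) z.1, z.2)

lemma sliceWeight_mem_quasiPolynomial {k : Fin (d + 1)} {h : IntForm (Fin (d + 1))}
    (hk : 0 < h.1 k) {w : IntForm (Fin (d + 1)) → ℚ}
    (hw : w ∈ quasiPolynomial (IntForm (Fin (d + 1)))) :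
    sliceWeight k h w ∈ quasiPolynomial (IntForm (Fin d)) := by
  let φ : IntForm (Fin d) →+ ℤ := (formEval ℤ (deleteCoord k h)).toAddMonoidHom
  obtain ⟨c, hc⟩ := Int.eq_ofNat_of_zero_le hk.le
  have hc_pos : 0 < c := by omega
  have h_dvd := (isPeriodic_emod hc_pos φ 0 fun r => if r = 0 then 1 else 0).mem_quasiPolynomial
  have h_subst := subst_floor_mem_quasiPolynomial
    (comp_insertNth_mem_quasiPolynomial k hw) (-φ) 0 hc_pos
  convert mul_mem h_dvd h_subst using 1
  funext z
  simp [sliceWeight, φ, hc]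

lemma sliceWeight_zero (k : Fin (d + 1)) (h : IntForm (Fin (d + 1)))
    (w : IntForm (Fin (d + 1)) → ℚ) : sliceWeight k h w 0 = w 0 := by
  simp [sliceWeight]
  rfl

lemma hasWeightedCount_slice_of_pos
    (ih : ∀ Cs : Finset (IntForm (Fin d)),
      Bornology.IsBounded (openPolytope Cs (1 : ℝ)) → Reciprocity Cs)
    {Cs : Finset (IntForm (Fin (d + 1)))} (hb : Bornology.IsBounded (openPolytope Cs (1 : ℝ)))
    {h : IntForm (Fin (d + 1))} {k : Fin (d + 1)} (hk : 0 < h.1 k)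
    {w : IntForm (Fin (d + 1)) → ℚ} (hw : w ∈ quasiPolynomial (IntForm (Fin (d + 1)))) :
    HasWeightedCount (fun t => openPolytope Cs t ∩ {x | formEval ℤ h (x, t) = 0}) w
      (openEuler d (openPolytope Cs (1 : ℝ) ∩ {x | formEval ℝ h (x, 1) = 0}) * w 0) := by
  have h_count := ih (Cs.image (eliminateCoord k h))
    (removeNth_image_slice hk Cs ▸ isBounded_removeNth_image (hb.subset Set.inter_subset_left) k)
    _ (sliceWeight_mem_quasiPolynomial hk hw)
  rw [sliceWeight_zero, ← removeNth_image_slice hk, openEuler_congr d Set.image_nonempty] at h_count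
  refine h_count.congr fun t _ => ?_
  have h_support : ∑ᶠ y ∈ openPolytope (Cs.image (eliminateCoord k h)) t, sliceWeight k h w (y, t) =
      ∑ᶠ y ∈ openPolytope (Cs.image (eliminateCoord k h)) t ∩
        {y | h.1 k ∣ formEval ℤ (deleteCoord k h) (y, t)}, sliceWeight k h w (y, t) := by
    refine finsum_mem_inter_support_eq' _ _ _ fun y hy => ?_
    have h_dvd : h.1 k ∣ formEval ℤ (deleteCoord k h) (y, t) := by
      by_contra h_dvd
      simp [sliceWeight, h_dvd] at hy
    simp [h_dvd]
  rw [h_support]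
  refine finsum_mem_eq_of_bijOn _ (removeNth_bijOn_slice hk Cs t) ?_
  rintro x ⟨_, hx_zero : formEval ℤ h (x, t) = 0⟩
  rw [← Fin.insertNth_self_removeNth k x, formEval_insertNth, Int.cast_id] at hx_zero
  have h_val : formEval ℤ (deleteCoord k h) (k.removeNth x, t) = h.1 k * -x k := by linarith
  simp [sliceWeight, h_val, hk.ne']

lemma hasWeightedCount_slice
    (ih : ∀ Cs : Finset (IntForm (Fin d)),
      Bornology.IsBounded (openPolytope Cs (1 : ℝ)) → Reciprocity Cs)
    {Cs : Finset (IntForm (Fin (d + 1)))} (hb : Bornology.IsBounded (openPolytope Cs (1 : ℝ)))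
    {h : IntForm (Fin (d + 1))} (hh : h ≠ 0)
    {w : IntForm (Fin (d + 1)) → ℚ} (hw : w ∈ quasiPolynomial (IntForm (Fin (d + 1)))) :
    HasWeightedCount (fun t => openPolytope Cs t ∩ {x | formEval ℤ h (x, t) = 0}) w
      (openEuler d (openPolytope Cs (1 : ℝ) ∩ {x | formEval ℝ h (x, 1) = 0}) * w 0) := by
  by_cases h_fst : h.1 = 0
  · have h_snd : h.2 ≠ 0 := fun h_snd => hh (Prod.ext h_fst h_snd)
    have h_real : openPolytope Cs (1 : ℝ) ∩ {x | formEval ℝ h (x, 1) = 0} = ∅ := by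
      simp [formEval_eq_of_fst_eq_zero h_fst, h_snd]
    rw [h_real, openEuler_empty, zero_mul]
    refine hasWeightedCount_zero_of_forall_eq_empty w fun t ht => ?_
    have ht' : t ≠ 0 := by omega
    simp [formEval_eq_of_fst_eq_zero h_fst, h_snd, ht']
  · obtain ⟨k, hk⟩ := Function.ne_iff.1 h_fst
    rcases lt_or_gt_of_ne hk with hk | hk
    · simpa using hasWeightedCount_slice_of_pos ih hb (h := -h) (by simpa using hk) hw
    · exact hasWeightedCount_slice_of_pos ih hb hk hw

end Slice

/-! ### Eliminating a coordinate bounded by one form from each side -/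

section Fiber

variable {d : ℕ} {R : Type*} [CommRing R] {k : Fin (d + 1)} {C₁ C₂ : IntForm (Fin (d + 1))}
  {Es : Finset (IntForm (Fin (d + 1)))}

/-- Fourier–Motzkin elimination of the `k`-th coordinate from the open polytope cut out by a lower
bound `C₁` and an upper bound `C₂` on that coordinate, and by forms `Es` not involving it. -/
def projectForms (k : Fin (d + 1)) (C₁ C₂ : IntForm (Fin (d + 1)))
    (Es : Finset (IntForm (Fin (d + 1)))) : Finset (IntForm (Fin d)) :=
  insert (eliminateCoord k C₁ C₂) (Es.image (deleteCoord k))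

lemma formEval_eliminateCoord_eq (s : R) (y : Fin d → R) (t : R) :
    formEval R (eliminateCoord k C₁ C₂) (y, t) =
      C₁.1 k * formEval R C₂ (k.insertNth s y, t) +
        (-C₂.1 k : ℤ) * formEval R C₁ (k.insertNth s y, t) := by
  rw [eliminateCoord, map_sub, LinearMap.sub_apply, formEval_zsmul_apply, formEval_zsmul_apply,
    formEval_insertNth, formEval_insertNth]
  push_cast
  ring

lemma insertNth_mem_openPolytope [LT R] (hE : ∀ C ∈ Es, C.1 k = 0) {s : R} {y : Fin d → R}
    {t : R} :
    (k.insertNth s y : Fin (d + 1) → R) ∈ openPolytope (insert C₁ (insert C₂ Es)) t ↔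
      0 < formEval R C₁ (k.insertNth s y, t) ∧ 0 < formEval R C₂ (k.insertNth s y, t) ∧
        ∀ C ∈ Es, 0 < formEval R (deleteCoord k C) (y, t) := by
  simp only [openPolytope, Finset.forall_mem_insert, Set.mem_ofPred_eq]
  refine and_congr_right' (and_congr_right' (forall₂_congr fun C hC => ?_))
  rw [formEval_insertNth, hE C hC, Int.cast_zero, zero_mul, zero_add]

lemma mem_openPolytope_projectForms [LT R] {y : Fin d → R} {t : R} :
    y ∈ openPolytope (projectForms k C₁ C₂ Es) t ↔
      0 < formEval R (eliminateCoord k C₁ C₂) (y, t) ∧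
        ∀ C ∈ Es, 0 < formEval R (deleteCoord k C) (y, t) := by
  simp only [openPolytope, projectForms, Finset.forall_mem_insert, Finset.forall_mem_image,
    Set.mem_ofPred_eq]

lemma mem_openPolytope_projectForms_of_insertNth_mem [LinearOrder R] [IsStrictOrderedRing R]
    (h₁ : 0 < C₁.1 k) (h₂ : C₂.1 k < 0) (hE : ∀ C ∈ Es, C.1 k = 0) {s : R} {y : Fin d → R} {t : R}
    (h : (k.insertNth s y : Fin (d + 1) → R) ∈ openPolytope (insert C₁ (insert C₂ Es)) t) :
    y ∈ openPolytope (projectForms k C₁ C₂ Es) t := by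
  obtain ⟨h_lower, h_upper, h_rest⟩ := (insertNth_mem_openPolytope hE).1 h
  refine mem_openPolytope_projectForms.2 ⟨?_, h_rest⟩
  rw [formEval_eliminateCoord_eq s]
  exact add_pos (mul_pos (Int.cast_pos.2 h₁) h_upper)
    (mul_pos (Int.cast_pos.2 (neg_pos.2 h₂)) h_lower)

lemma removeNth_image_openPolytope (h₁ : 0 < C₁.1 k) (h₂ : C₂.1 k < 0)
    (hE : ∀ C ∈ Es, C.1 k = 0) :
    k.removeNth '' openPolytope (insert C₁ (insert C₂ Es)) (1 : ℝ) =
      openPolytope (projectForms k C₁ C₂ Es) (1 : ℝ) := by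
  ext y
  constructor
  · rintro ⟨x, hx, rfl⟩
    rw [← Fin.insertNth_self_removeNth k x] at hx
    exact mem_openPolytope_projectForms_of_insertNth_mem h₁ h₂ hE hx
  · intro hy
    obtain ⟨h_pos, h_rest⟩ := mem_openPolytope_projectForms.1 hy
    have h₁' : (0 : ℝ) < C₁.1 k := by exact_mod_cast h₁
    have h₂' : (C₂.1 k : ℝ) < 0 := by exact_mod_cast h₂
    have h_lt : -formEval ℝ (deleteCoord k C₁) (y, 1) / C₁.1 k <
        formEval ℝ (deleteCoord k C₂) (y, 1) / -C₂.1 k := by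
      rw [div_lt_div_iff₀ h₁' (neg_pos.2 h₂')]
      rw [formEval_eliminateCoord_eq 0, formEval_insertNth, formEval_insertNth] at h_pos
      push_cast at h_pos
      linarith
    obtain ⟨s, h_lower, h_upper⟩ := exists_between h_lt
    rw [div_lt_iff₀ h₁'] at h_lower
    rw [lt_div_iff₀ (neg_pos.2 h₂')] at h_upper
    refine ⟨k.insertNth s y, (insertNth_mem_openPolytope hE).2 ⟨?_, ?_, h_rest⟩,
      Fin.removeNth_insertNth _ _ _⟩ <;> rw [formEval_insertNth] <;> linarith

/-- The largest integer at which the lower bound `C₁` on the `k`-th coordinate is violated. -/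
def lowerBound (k : Fin (d + 1)) (C₁ : IntForm (Fin (d + 1))) (z : IntForm (Fin d)) : ℤ :=
  -formEval ℤ (deleteCoord k C₁) z / C₁.1 k

/-- The largest integer at which the upper bound `C₂` on the `k`-th coordinate is satisfied. -/
def upperBound (k : Fin (d + 1)) (C₂ : IntForm (Fin (d + 1))) (z : IntForm (Fin d)) : ℤ :=
  (formEval ℤ (deleteCoord k C₂) z - 1) / -C₂.1 k

lemma formEval_pos_iff_lowerBound_lt (h₁ : 0 < C₁.1 k) {s : ℤ} {y : Fin d → ℤ} {t : ℤ} :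
    0 < formEval ℤ C₁ (k.insertNth s y, t) ↔ lowerBound k C₁ (y, t) < s := by
  rw [lowerBound, Int.ediv_lt_iff_lt_mul h₁, formEval_insertNth, Int.cast_id]
  constructor <;> intro h <;> linarith

lemma formEval_pos_iff_le_upperBound (h₂ : C₂.1 k < 0) {s : ℤ} {y : Fin d → ℤ} {t : ℤ} :
    0 < formEval ℤ C₂ (k.insertNth s y, t) ↔ s ≤ upperBound k C₂ (y, t) := by
  rw [upperBound, Int.le_ediv_iff_mul_le (neg_pos.2 h₂), formEval_insertNth, Int.cast_id]
  constructor <;> intro h <;> linarith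

lemma lowerBound_le_upperBound (h₁ : 0 < C₁.1 k) (h₂ : C₂.1 k < 0) {y : Fin d → ℤ} {t : ℤ}
    (h : 0 < formEval ℤ (eliminateCoord k C₁ C₂) (y, t)) :
    lowerBound k C₁ (y, t) ≤ upperBound k C₂ (y, t) := by
  by_contra! h_lt
  rw [← not_le, ← formEval_pos_iff_le_upperBound h₂] at h_lt
  have h_lower := (formEval_pos_iff_lowerBound_lt h₁).not.2 (lt_irrefl (lowerBound k C₁ (y, t)))
  rw [formEval_eliminateCoord_eq (lowerBound k C₁ (y, t)), Int.cast_id, Int.cast_id] at h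
  nlinarith

lemma openPolytope_eq_biUnion_image_Ioc (h₁ : 0 < C₁.1 k) (h₂ : C₂.1 k < 0)
    (hE : ∀ C ∈ Es, C.1 k = 0) (t : ℤ) :
    openPolytope (insert C₁ (insert C₂ Es)) t = ⋃ y ∈ openPolytope (projectForms k C₁ C₂ Es) t,
      (k.insertNth · y) '' Set.Ioc (lowerBound k C₁ (y, t)) (upperBound k C₂ (y, t)) := by
  ext x
  simp only [Set.mem_iUnion₂, Set.mem_image]
  constructor
  · intro hx
    rw [← Fin.insertNth_self_removeNth k x] at hx
    obtain ⟨h_lower, h_upper, -⟩ := (insertNth_mem_openPolytope hE).1 hx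
    exact ⟨k.removeNth x, mem_openPolytope_projectForms_of_insertNth_mem h₁ h₂ hE hx, x k,
      ⟨(formEval_pos_iff_lowerBound_lt h₁).1 h_lower,
        (formEval_pos_iff_le_upperBound h₂).1 h_upper⟩,
      Fin.insertNth_self_removeNth k x⟩
  · rintro ⟨y, hy, s, ⟨h_lower, h_upper⟩, rfl⟩
    exact (insertNth_mem_openPolytope hE).2 ⟨(formEval_pos_iff_lowerBound_lt h₁).2 h_lower,
      (formEval_pos_iff_le_upperBound h₂).2 h_upper, (mem_openPolytope_projectForms.1 hy).2⟩

lemma sum_Ioc_sub_pred (A : ℤ → ℚ) {l u : ℤ} (h : l ≤ u) :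
    ∑ s ∈ Finset.Ioc l u, (A s - A (s - 1)) = A u - A l := by
  induction u, h using Int.leInduction with
  | base => simp
  | succ n hn ih =>
    rw [← Finset.insert_Ioc_right_eq_Ioc_add_one hn, Finset.sum_insert (by simp), ih]
    simp

lemma finsum_openPolytope_eq (h₁ : 0 < C₁.1 k) (h₂ : C₂.1 k < 0) (hE : ∀ C ∈ Es, C.1 k = 0)
    {w : IntForm (Fin (d + 1)) → ℚ} {A : IntForm (Fin d) × ℤ → ℚ}
    (hA : ∀ z s, A (z, s) - A (z, s - 1) = w (k.insertNth s z.1, z.2)) {t : ℤ}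
    (h_fin : (openPolytope (projectForms k C₁ C₂ Es) t).Finite) :
    ∑ᶠ x ∈ openPolytope (insert C₁ (insert C₂ Es)) t, w (x, t) =
      ∑ᶠ y ∈ openPolytope (projectForms k C₁ C₂ Es) t,
        (A ((y, t), upperBound k C₂ (y, t)) - A ((y, t), lowerBound k C₁ (y, t))) := by
  rw [openPolytope_eq_biUnion_image_Ioc h₁ h₂ hE, finsum_mem_biUnion _ h_fin
    fun y _ => (Set.finite_Ioc _ _).image _]
  · refine finsum_mem_congr rfl fun y hy => ?_
    rw [finsum_mem_image (Fin.insertNth_left_injective (α := fun _ => ℤ) y).injOn, ← Finset.coe_Ioc,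
      finsum_mem_coe_finset, ← sum_Ioc_sub_pred (fun s => A ((y, t), s))
        (lowerBound_le_upperBound h₁ h₂ (mem_openPolytope_projectForms.1 hy).1)]
    simp only [hA]
  · intro y _ y' _ hne
    refine Set.disjoint_left.2 ?_
    rintro _ ⟨s, _, rfl⟩ ⟨s', _, h_eq⟩
    exact hne (Fin.insertNth_inj.1 h_eq).2.symm

lemma reciprocity_insert_insert
    (ih : ∀ Cs : Finset (IntForm (Fin d)),
      Bornology.IsBounded (openPolytope Cs (1 : ℝ)) → Reciprocity Cs)
    (h₁ : 0 < C₁.1 k) (h₂ : C₂.1 k < 0) (hE : ∀ C ∈ Es, C.1 k = 0)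
    (hb : Bornology.IsBounded (openPolytope (insert C₁ (insert C₂ Es)) (1 : ℝ))) :
    Reciprocity (insert C₁ (insert C₂ Es)) := by
  intro w hw
  obtain ⟨A, hA, hA_sub⟩ := exists_antidifference (comp_insertNth_mem_quasiPolynomial k hw)
  let w' : IntForm (Fin d) → ℚ := fun z => A (z, upperBound k C₂ z) - A (z, lowerBound k C₁ z)
  obtain ⟨c₁, hc₁⟩ := Int.eq_ofNat_of_zero_le h₁.le
  obtain ⟨c₂, hc₂⟩ := Int.eq_ofNat_of_zero_le (neg_pos.2 h₂).le
  have h_upper := subst_floor_mem_quasiPolynomial hA (formEval ℤ (deleteCoord k C₂)).toAddMonoidHom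
    (-1) (c := c₂) (by omega)
  have h_lower := subst_floor_mem_quasiPolynomial hA
    (-(formEval ℤ (deleteCoord k C₁)).toAddMonoidHom) 0 (c := c₁) (by omega)
  have hw' : w' ∈ quasiPolynomial (IntForm (Fin d)) := by
    convert sub_mem h_upper h_lower using 1
    funext z
    simp [w', upperBound, lowerBound, hc₁, hc₂, sub_eq_add_neg]
  -- The interval of summation for the form `(0, 0)` is `Ioc 0 (-1)`, whence the sign.
  have hw'_zero : w' 0 = -w 0 := by
    have h_upper_zero : upperBound k C₂ 0 = -1 := by
      simp [upperBound, hc₂, Int.neg_one_ediv, Int.sign_natCast_of_ne_zero (by omega : c₂ ≠ 0)]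
    have h_insert : k.insertNth (0 : ℤ) (0 : Fin d → ℤ) = (0 : Fin (d + 1) → ℤ) :=
      (Fin.insertNth_zero_right k 0).trans (Pi.single_zero k)
    have h_sub : A (0, 0) - A (0, -1) = w 0 := by
      rw [← zero_sub, hA_sub, Prod.fst_zero, Prod.snd_zero, h_insert, Prod.mk_zero_zero]
    simp only [w', h_upper_zero, lowerBound, map_zero, neg_zero, Int.zero_ediv]
    rw [← h_sub, neg_sub]
  have hb' : Bornology.IsBounded (openPolytope (projectForms k C₁ C₂ Es) (1 : ℝ)) :=
    removeNth_image_openPolytope h₁ h₂ hE ▸ isBounded_removeNth_image hb k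
  have h_count := ih _ hb' w' hw'
  rw [← removeNth_image_openPolytope h₁ h₂ hE, openEuler_congr d Set.image_nonempty, hw'_zero,
    show openEuler d _ * -w 0 = openEuler (d + 1) _ * w 0 by rw [openEuler_succ]; ring] at h_count
  exact h_count.congr fun t ht =>
    finsum_openPolytope_eq h₁ h₂ hE hA_sub (finite_openPolytope hb' ht)

end Fiber

/-! ### Ehrhart–Macdonald reciprocity at dilation zero -/

section Ehrhart

variable {d : ℕ} {R : Type*}

lemma Reciprocity.congr {Cs Cs' : Finset (IntForm (Fin d))} (h : Reciprocity Cs)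
    (h_int : ∀ t : ℤ, openPolytope Cs' t = openPolytope Cs t)
    (h_real : openPolytope Cs' (1 : ℝ) = openPolytope Cs 1) : Reciprocity Cs' := by
  intro w hw
  rw [h_real]
  exact (h w hw).congr fun t _ => by rw [h_int]

lemma reciprocity_fin_zero (Cs : Finset (IntForm (Fin 0))) : Reciprocity Cs := by
  by_cases h_ne : (openPolytope Cs (1 : ℝ)).Nonempty
  · obtain ⟨y, hy⟩ := h_ne
    have h_univ (t : ℤ) (ht : 1 ≤ t) : openPolytope Cs t = {0} := by
      refine Set.Subset.antisymm (fun x _ => Subsingleton.elim _ _) ?_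
      rintro _ rfl C hC
      have h_pos := hy C hC
      rw [formEval_eq_of_fst_eq_zero (Subsingleton.elim _ _)] at h_pos ⊢
      have h_snd : 0 < C.2 := by simpa using h_pos
      exact mul_pos h_snd (by omega)
    intro w hw
    rw [openEuler_of_nonempty _ ⟨y, hy⟩, pow_zero, one_mul]
    exact ⟨fun t => w (0, t), comp_addMonoidHom_mem_quasiPolynomial (AddMonoidHom.inr _ ℤ) hw,
      fun t ht => by rw [h_univ t ht, finsum_mem_singleton], rfl⟩
  · exact reciprocity_of_eq_empty (Set.not_nonempty_iff_eq_empty.1 h_ne)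

lemma openPolytope_eq_empty_of_forall_nonneg {ι : Type*} [Fintype ι] {Cs : Finset (IntForm ι)}
    (hb : Bornology.IsBounded (openPolytope Cs (1 : ℝ))) {v : ι → ℝ} (hv : v ≠ 0)
    (h_nonneg : ∀ C ∈ Cs, 0 ≤ formEval ℝ C (v, 0)) : openPolytope Cs (1 : ℝ) = ∅ := by
  refine Set.eq_empty_of_forall_notMem fun x hx => ?_
  have h_ray (r : ℝ) (hr : 0 ≤ r) : x + r • v ∈ openPolytope Cs (1 : ℝ) := by
    intro C hC
    rw [show (x + r • v, (1 : ℝ)) = (x, 1) + r • (v, (0 : ℝ)) by simp, map_add, map_smul]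
    exact add_pos_of_pos_of_nonneg (hx C hC) (mul_nonneg hr (h_nonneg C hC))
  obtain ⟨b, hb⟩ := hb.exists_norm_le
  have h_norm : 0 < ‖v‖ := norm_pos_iff.2 hv
  have hb_nonneg : 0 ≤ b := (norm_nonneg x).trans (hb x hx)
  have h_le := hb _ (h_ray ((b + ‖x‖ + 1) / ‖v‖) (by positivity))
  have h_far := norm_sub_le (x + ((b + ‖x‖ + 1) / ‖v‖) • v) x
  rw [add_sub_cancel_left, norm_smul, Real.norm_of_nonneg (by positivity),
    div_mul_cancel₀ _ h_norm.ne'] at h_far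
  linarith

lemma formEval_single [CommRing R] {ι : Type*} [Fintype ι] [DecidableEq ι] (C : IntForm ι) (k : ι)
    (r : R) : formEval R C (Pi.single k r, 0) = C.1 k * r := by
  simp [formEval_apply, Pi.single_apply]

section Redundancy

variable {ι : Type*} [Fintype ι] {Cs : Finset (IntForm ι)} {C D : IntForm ι}
  {α β : ℤ} [CommRing R] [LinearOrder R] [IsStrictOrderedRing R]

lemma formEval_pos_of_sub_nonneg (hα : 0 < α) (hβ : 0 < β) {z : (ι → R) × R}
    (hD : 0 < formEval R D z) (h : 0 ≤ formEval R (β • C - α • D) z) : 0 < formEval R C z := by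
  rw [map_sub, LinearMap.sub_apply, formEval_zsmul_apply, formEval_zsmul_apply, sub_nonneg] at h
  have hα' : (0 : R) < α := by exact_mod_cast hα
  have hβ' : (0 : R) < β := by exact_mod_cast hβ
  exact pos_of_mul_pos_right ((mul_pos hα' hD).trans_le h) hβ'.le

lemma openPolytope_erase [DecidableEq (IntForm ι)] (hC : C ∈ Cs) (hD : D ∈ Cs) (hne : D ≠ C)
    (hα : 0 < α) (hβ : 0 < β) (h_eq : β • C - α • D = 0) (t : R) :
    openPolytope (Cs.erase C) t = openPolytope Cs t := by
  refine Set.Subset.antisymm (fun x hx => ?_) fun x hx E hE => hx E (Finset.mem_of_mem_erase hE)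
  rw [← Finset.insert_erase hC, openPolytope_insert]
  exact ⟨hx, formEval_pos_of_sub_nonneg hα hβ (hx D (Finset.mem_erase.2 ⟨hne, hD⟩))
    (by rw [h_eq, map_zero, LinearMap.zero_apply])⟩

lemma openPolytope_insert_sub_erase [DecidableEq (IntForm ι)] (hC : C ∈ Cs) (hD : D ∈ Cs)
    (hne : D ≠ C) (hα : 0 < α) (hβ : 0 < β) (t : R) :
    openPolytope (insert (β • C - α • D) Cs) t =
      openPolytope (insert (β • C - α • D) (Cs.erase C)) t := by
  refine Set.Subset.antisymm
    (fun x hx E hE => hx E (Finset.insert_subset_insert _ (Cs.erase_subset C) hE)) fun x hx => ?_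
  rw [openPolytope_insert] at hx ⊢
  obtain ⟨hx, h_pos⟩ := hx
  refine ⟨?_, h_pos⟩
  rw [← Finset.insert_erase hC, openPolytope_insert]
  exact ⟨hx, formEval_pos_of_sub_nonneg hα hβ (hx D (Finset.mem_erase.2 ⟨hne, hD⟩)) h_pos.le⟩

end Redundancy

section Card

variable {α : Type*} [DecidableEq α] {p : α → Prop} [DecidablePred p] {s : Finset α} {a b : α}

lemma card_filter_erase_lt (ha : a ∈ s) (hpa : p a) :
    ((s.erase a).filter p).card < (s.filter p).card := by
  rw [Finset.filter_erase]
  exact Finset.card_erase_lt_of_mem (Finset.mem_filter.2 ⟨ha, hpa⟩)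

lemma card_filter_insert_erase_lt (ha : a ∈ s) (hpa : p a) (hpb : ¬ p b) :
    ((insert b (s.erase a)).filter p).card < (s.filter p).card := by
  rw [Finset.filter_insert, if_neg hpb]
  exact card_filter_erase_lt ha hpa

end Card

-- Two lower (or two upper) bounds `C`, `D` on the `k`-th coordinate: after cutting along the
-- hyperplane on which they agree, one of them is redundant in each of the two pieces.
lemma reciprocity_of_same_sign {k : Fin (d + 1)}
    (ih_dim : ∀ Cs : Finset (IntForm (Fin d)),
      Bornology.IsBounded (openPolytope Cs (1 : ℝ)) → Reciprocity Cs)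
    {Cs : Finset (IntForm (Fin (d + 1)))} (hb : Bornology.IsBounded (openPolytope Cs (1 : ℝ)))
    (ih : ∀ Cs' : Finset (IntForm (Fin (d + 1))),
      (Cs'.filter fun C => C.1 k ≠ 0).card < (Cs.filter fun C => C.1 k ≠ 0).card →
      Bornology.IsBounded (openPolytope Cs' (1 : ℝ)) → Reciprocity Cs')
    {C D : IntForm (Fin (d + 1))} (hC : C ∈ Cs) (hD : D ∈ Cs) (hne : C ≠ D)
    (h_sign : 0 < C.1 k * D.1 k) : Reciprocity Cs := by
  have hC_ne : C.1 k ≠ 0 := left_ne_zero_of_mul h_sign.ne'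
  have hD_ne : D.1 k ≠ 0 := right_ne_zero_of_mul h_sign.ne'
  have hα : 0 < |C.1 k| := abs_pos.2 hC_ne
  have hβ : 0 < |D.1 k| := abs_pos.2 hD_ne
  set h := |D.1 k| • C - |C.1 k| • D with h_def
  have h_coeff : h.1 k = 0 := by
    have h_abs : |D.1 k| * C.1 k = |C.1 k| * D.1 k := by
      rcases pos_and_pos_or_neg_and_neg_of_mul_pos h_sign with ⟨hC, hD⟩ | ⟨hC, hD⟩
      · rw [abs_of_pos hC, abs_of_pos hD, mul_comm]
      · rw [abs_of_neg hC, abs_of_neg hD]; ring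
    simp [h_def, h_abs]
  by_cases h_zero : h = 0
  · refine (ih (Cs.erase C) (card_filter_erase_lt hC hC_ne) ?_).congr
      (fun t => (openPolytope_erase hC hD hne.symm hα hβ h_zero t).symm)
      (openPolytope_erase hC hD hne.symm hα hβ h_zero 1).symm
    rwa [openPolytope_erase hC hD hne.symm hα hβ h_zero]
  · have h_neg_def : -h = |C.1 k| • D - |D.1 k| • C := neg_sub _ _
    refine reciprocity_of_cut hb h_zero ?_ ?_ fun w hw => hasWeightedCount_slice ih_dim hb h_zero hw
    · have h_int (t : ℤ) := openPolytope_insert_sub_erase hC hD hne.symm hα hβ t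
      have h_real := openPolytope_insert_sub_erase hC hD hne.symm hα hβ (1 : ℝ)
      refine (ih _ (card_filter_insert_erase_lt hC hC_ne (not_not.2 h_coeff)) ?_).congr h_int h_real
      rw [← h_real, openPolytope_insert]
      exact hb.subset Set.inter_subset_left
    · have h_int (t : ℤ) := openPolytope_insert_sub_erase hD hC hne hβ hα t
      have h_real := openPolytope_insert_sub_erase hD hC hne hβ hα (1 : ℝ)
      rw [← h_neg_def] at h_int h_real
      refine (ih _ (card_filter_insert_erase_lt hD hD_ne ?_) ?_).congr h_int h_real
      · simpa using h_coeff
      rw [← h_real, openPolytope_insert]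
      exact hb.subset Set.inter_subset_left

lemma eq_insert_insert_filter_of_forall_mul_nonpos {k : Fin (d + 1)}
    {Cs : Finset (IntForm (Fin (d + 1)))}
    (h_sign : ∀ C ∈ Cs, ∀ D ∈ Cs, C ≠ D → C.1 k * D.1 k ≤ 0) {C₁ C₂ : IntForm (Fin (d + 1))}
    (hC₁ : C₁ ∈ Cs) (hC₂ : C₂ ∈ Cs) (h₁ : 0 < C₁.1 k) (h₂ : C₂.1 k < 0) :
    Cs = insert C₁ (insert C₂ (Cs.filter fun C => C.1 k = 0)) := by
  ext C
  simp only [Finset.mem_insert, Finset.mem_filter]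
  refine ⟨fun hC => ?_, by rintro (rfl | rfl | hC); exacts [hC₁, hC₂, hC.1]⟩
  by_contra! h_not
  have h_le₁ := h_sign C hC C₁ hC₁ h_not.1
  have h_le₂ := h_sign C hC C₂ hC₂ h_not.2.1
  exact h_not.2.2 hC (by nlinarith)

lemma reciprocity_succ
    (ih_dim : ∀ Cs : Finset (IntForm (Fin d)),
      Bornology.IsBounded (openPolytope Cs (1 : ℝ)) → Reciprocity Cs)
    (Cs : Finset (IntForm (Fin (d + 1)))) (hb : Bornology.IsBounded (openPolytope Cs (1 : ℝ))) :
    Reciprocity Cs := by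
  induction h_card : (Cs.filter fun C => C.1 0 ≠ 0).card using Nat.strong_induction_on
    generalizing Cs with
  | _ n ih =>
  by_cases h_same : ∃ C ∈ Cs, ∃ D ∈ Cs, C ≠ D ∧ 0 < C.1 0 * D.1 0
  · obtain ⟨C, hC, D, hD, hne, h_sign⟩ := h_same
    exact reciprocity_of_same_sign ih_dim hb
      (fun Cs' h_lt hb' => ih _ (h_card ▸ h_lt) Cs' hb' rfl) hC hD hne h_sign
  push Not at h_same
  have h_single_ne (r : ℝ) (hr : r ≠ 0) : (Pi.single 0 r : Fin (d + 1) → ℝ) ≠ 0 := by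
    simpa using hr
  by_cases h_lower : ∃ C ∈ Cs, 0 < C.1 0
  swap
  · push Not at h_lower
    refine reciprocity_of_eq_empty (openPolytope_eq_empty_of_forall_nonneg hb
      (h_single_ne (-1) (by norm_num)) fun C hC => ?_)
    simpa [formEval_single] using h_lower C hC
  by_cases h_upper : ∃ C ∈ Cs, C.1 0 < 0
  swap
  · push Not at h_upper
    refine reciprocity_of_eq_empty (openPolytope_eq_empty_of_forall_nonneg hb
      (h_single_ne 1 one_ne_zero) fun C hC => ?_)
    simpa [formEval_single] using h_upper C hC
  obtain ⟨C₁, hC₁, h₁⟩ := h_lower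
  obtain ⟨C₂, hC₂, h₂⟩ := h_upper
  rw [eq_insert_insert_filter_of_forall_mul_nonpos h_same hC₁ hC₂ h₁ h₂] at hb ⊢
  exact reciprocity_insert_insert ih_dim h₁ h₂ (fun C hC => (Finset.mem_filter.1 hC).2) hb

lemma reciprocity_of_isBounded (Cs : Finset (IntForm (Fin d)))
    (hb : Bornology.IsBounded (openPolytope Cs (1 : ℝ))) : Reciprocity Cs := by
  induction d with
  | zero => exact reciprocity_fin_zero Cs
  | succ d ih => exact reciprocity_succ ih Cs hb

/-- An integral form with its variables renamed along `e`. -/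
def reindexForm {ι ι' : Type*} (e : ι ≃ ι') (C : IntForm ι) : IntForm ι' :=
  (C.1 ∘ e.symm, C.2)

lemma openPolytope_image_reindexForm [CommRing R] [LT R] {ι ι' : Type*} [Fintype ι] [Fintype ι']
    [DecidableEq (IntForm ι')] (e : ι ≃ ι') (Cs : Finset (IntForm ι)) (t : R) :
    openPolytope (Cs.image (reindexForm e)) t =
      Equiv.arrowCongr e (Equiv.refl R) '' openPolytope Cs t := by
  have h_eval (C : IntForm ι) (x : ι' → R) :
      formEval R (reindexForm e C) (x, t) = formEval R C (x ∘ e, t) := by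
    simp [formEval_apply, reindexForm, ← Equiv.sum_comp e]
  ext x
  simp only [Equiv.image_eq_preimage_symm, openPolytope, Finset.forall_mem_image, h_eval]
  rfl

theorem exists_quasiPolynomial_ncard_openPolytope {ι : Type*} [Fintype ι]
    (Cs : Finset (IntForm ι)) (hb : Bornology.IsBounded (openPolytope Cs (1 : ℝ))) :
    ∃ W ∈ quasiPolynomial ℤ, (∀ t : ℤ, 1 ≤ t → ((openPolytope Cs t).ncard : ℚ) = W t) ∧
      W 0 = openEuler (Fintype.card ι) (openPolytope Cs (1 : ℝ)) := by
  let e := Fintype.equivFin ι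
  have hb' : Bornology.IsBounded (openPolytope (Cs.image (reindexForm e)) (1 : ℝ)) := by
    rw [openPolytope_image_reindexForm, ← Bornology.forall_isBounded_image_eval_iff]
    intro i
    rw [Set.image_image]
    exact Bornology.forall_isBounded_image_eval_iff.2 hb (e.symm i)
  obtain ⟨W, hW, hW_sum, hW_zero⟩ := reciprocity_of_isBounded _ hb' 1 (one_mem _)
  refine ⟨W, hW, fun t ht => ?_, ?_⟩
  · rw [← hW_sum t ht, ← Set.ncard_image_of_injective _ (Equiv.injective _),
      ← openPolytope_image_reindexForm e, ← finsum_one,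
      Nat.cast_finsum_mem (finite_openPolytope hb' ht)]
    simp only [Nat.cast_one, Pi.one_apply]
  · rw [hW_zero, Pi.one_apply, mul_one, openPolytope_image_reindexForm,
      openEuler_congr _ Set.image_nonempty]

end Ehrhart

/-! ### Interiors of rational polytopes -/

section RationalPolytope

open Classical in
lemma exists_nonneg_forall_mul_le_iff {κ : Type*} {s : Finset κ} {n e : κ → ℝ} :
    (∃ l, 0 ≤ l ∧ ∀ a ∈ s, l * n a ≤ e a) ↔ (∀ a ∈ s, 0 ≤ n a → 0 ≤ e a) ∧
      ∀ a ∈ s, n a < 0 → ∀ b ∈ s, 0 < n b → n a * e b ≤ n b * e a := by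
  constructor
  · rintro ⟨l, hl, h⟩
    refine ⟨fun a ha ha' => (mul_nonneg hl ha').trans (h a ha), fun a ha ha' b hb hb' => ?_⟩
    nlinarith [h a ha, h b hb]
  · rintro ⟨h_nonneg, h_mul⟩
    let lower := insert 0 ((s.filter (n · < 0)).image fun a => e a / n a)
    have h_ne : lower.Nonempty := Finset.insert_nonempty _ _
    refine ⟨lower.max' h_ne, lower.le_max' _ (Finset.mem_insert_self _ _), fun b hb => ?_⟩
    rcases lt_trichotomy (n b) 0 with hn | hn | hn
    · refine (div_le_iff_of_neg hn).1 (lower.le_max' _ (Finset.mem_insert_of_mem ?_))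
      exact Finset.mem_image_of_mem (fun a => e a / n a) (Finset.mem_filter.2 ⟨hb, hn⟩)
    · simpa [hn] using h_nonneg b hb hn.ge
    · rw [← le_div_iff₀ hn, Finset.max'_le_iff]
      simp only [lower, Finset.forall_mem_insert, Finset.forall_mem_image, Finset.mem_filter]
      refine ⟨div_nonneg (h_nonneg b hb hn.le) hn.le, fun a ⟨ha, ha'⟩ => ?_⟩
      rw [le_div_iff₀ hn, div_mul_eq_mul_div, div_le_iff_of_neg ha']
      linarith [h_mul a ha ha' b hb hn]

variable {ι : Type*} [Fintype ι]

/-- The closed convex cone cut out by the weak inequalities `0 ≤ C`, `C ∈ Cs`. -/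
def closedCone (Cs : Finset (IntForm ι)) : Set ((ι → ℝ) × ℝ) :=
  {z | ∀ C ∈ Cs, 0 ≤ formEval ℝ C z}

lemma exists_closedCone_eq_setOf_shift (Cs : Finset (IntForm ι)) (g : (ι → ℤ) × ℤ) :
    ∃ Ds : Finset (IntForm ι), closedCone Ds = {z | ∃ l : ℝ, 0 ≤ l ∧
      z - l • (fun i => (g.1 i : ℝ), (g.2 : ℝ)) ∈ closedCone Cs} := by
  classical
  let n (C : IntForm ι) : ℤ := formEval ℤ C g
  refine ⟨Cs.filter (0 ≤ n ·) ∪ ((Cs.filter (n · < 0)) ×ˢ (Cs.filter (0 < n ·))).image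
    fun x => n x.2 • x.1 - n x.1 • x.2, Set.ext fun z => ?_⟩
  have h_shift : (∃ l : ℝ, 0 ≤ l ∧ z - l • (fun i => (g.1 i : ℝ), (g.2 : ℝ)) ∈ closedCone Cs) ↔
      ∃ l : ℝ, 0 ≤ l ∧ ∀ C ∈ Cs, l * (n C : ℝ) ≤ formEval ℝ C z := by
    simp only [closedCone, Set.mem_ofPred_eq, map_sub, map_smul, formEval_intCast, smul_eq_mul,
      sub_nonneg, n]
  have h_combine (C D : IntForm ι) : 0 ≤ formEval ℝ (n D • C - n C • D) z ↔
      (n C : ℝ) * formEval ℝ D z ≤ n D * formEval ℝ C z := by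
    rw [map_sub, LinearMap.sub_apply, formEval_zsmul_apply, formEval_zsmul_apply, sub_nonneg]
  rw [Set.mem_ofPred_eq, h_shift, exists_nonneg_forall_mul_le_iff]
  simp only [closedCone, Set.mem_ofPred_eq, Int.cast_nonneg_iff, Int.cast_lt_zero, Int.cast_pos,
    Finset.mem_union, or_imp, forall_and, Finset.forall_mem_image, Finset.mem_filter, and_imp,
    Finset.mem_product, h_combine]
  exact and_congr_right fun _ => ⟨fun h a ha ha' b hb hb' => @h (a, b) ha ha' hb hb',
    fun h x ha ha' hb hb' => h _ ha ha' _ hb hb'⟩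

lemma exists_int_smul_eq {ι : Type*} [Finite ι] (v : ι → ℚ) :
    ∃ N : ℤ, 0 < N ∧ ∃ x : ι → ℤ, ∀ i, (x i : ℝ) = N * v i := by
  cases nonempty_fintype ι
  have h_dvd (i : ι) : (v i).den ∣ ∏ j, (v j).den := Finset.dvd_prod_of_mem _ (Finset.mem_univ i)
  choose k hk using h_dvd
  refine ⟨∏ i, (v i).den, by exact_mod_cast Finset.prod_pos fun i _ => (v i).den_pos,
    fun i => k i * (v i).num, fun i => ?_⟩
  have h_num : ((v i).num : ℝ) = v i * (v i).den := by exact_mod_cast (Rat.mul_den_eq_num _).symm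
  rw [← Nat.cast_prod, hk i]
  push_cast
  rw [h_num]
  ring

lemma exists_closedCone_eq_singleton_zero : ∃ Cs : Finset (IntForm ι), closedCone Cs = {0} := by
  classical
  refine ⟨insert (0, 1) (insert (0, -1) (Finset.univ.image (fun i => (Pi.single i 1, 0)) ∪
    Finset.univ.image (fun i => (Pi.single i (-1), 0)))), Set.ext fun ⟨x, t⟩ => ?_⟩
  simp only [closedCone, Set.mem_ofPred_eq, Finset.forall_mem_insert, Finset.mem_union, or_imp,
    forall_and, Finset.forall_mem_image, Finset.mem_univ, true_imp_iff, formEval_apply]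
  simp [Pi.single_apply, le_antisymm_iff, Prod.le_def, Pi.le_def]
  tauto

lemma exists_closedCone_eq_hull {V : Finset (ι → ℝ)}
    (hV : ∀ v ∈ V, ∃ r : ι → ℚ, v = fun i => (r i : ℝ)) :
    ∃ Cs : Finset (IntForm ι), closedCone Cs =
      (PointedCone.hull ℝ ((fun v => (v, (1 : ℝ))) '' (V : Set (ι → ℝ))) :
        Set ((ι → ℝ) × ℝ)) := by
  classical
  induction V using Finset.induction_on with
  | empty =>
    obtain ⟨Cs, hCs⟩ := exists_closedCone_eq_singleton_zero (ι := ι)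
    exact ⟨Cs, by simp [hCs]⟩
  | insert v V _ ih =>
    obtain ⟨Cs, hCs⟩ := ih fun v hv => hV v (Finset.mem_insert_of_mem hv)
    obtain ⟨r, rfl⟩ := hV v (Finset.mem_insert_self _ _)
    obtain ⟨N, hN, x, hx⟩ := exists_int_smul_eq r
    obtain ⟨Ds, hDs⟩ := exists_closedCone_eq_setOf_shift Cs (x, N)
    have h_gen : ((fun i => (x i : ℝ), (N : ℝ)) : (ι → ℝ) × ℝ) =
        (N : ℝ) • (fun i => (r i : ℝ), (1 : ℝ)) := by
      simp [funext_iff, hx]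
    have hN' : (0 : ℝ) < N := by exact_mod_cast hN
    refine ⟨Ds, Set.ext fun z => ?_⟩
    rw [hDs, Finset.coe_insert, Set.image_insert_eq, SetLike.mem_coe, Submodule.mem_span_insert]
    simp only [Set.mem_ofPred_eq, hCs, SetLike.mem_coe, h_gen, smul_smul]
    constructor
    · rintro ⟨l, hl, hz⟩
      exact ⟨⟨l * N, by positivity⟩, _, hz, (add_sub_cancel _ _).symm⟩
    · rintro ⟨⟨l, hl⟩, y, hy, rfl⟩
      refine ⟨l / N, by positivity, ?_⟩
      rw [div_mul_cancel₀ _ hN'.ne']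
      simpa [Nonneg.mk_smul] using hy

lemma mem_convexHull_iff_mem_hull {E : Type*} [AddCommGroup E] [Module ℝ E] {V : Finset E}
    {x : E} : x ∈ convexHull ℝ (V : Set E) ↔
      (x, 1) ∈ PointedCone.hull ℝ ((fun v => (v, (1 : ℝ))) '' (V : Set E)) := by
  rw [Finset.mem_convexHull', Submodule.mem_span_image_finset_iff_exists_fun']
  simp only [Prod.ext_iff, Prod.fst_sum, Prod.snd_sum]
  constructor
  · rintro ⟨w, hw, h_one, h_x⟩
    refine ⟨fun v => ⟨max (w v) 0, le_max_right _ _⟩, ?_, ?_⟩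
    · exact (Finset.sum_congr rfl fun v hv => by simp [Nonneg.mk_smul, hw v hv]).trans h_x
    · exact (Finset.sum_congr rfl fun v hv => by simp [Nonneg.mk_smul, hw v hv]).trans h_one
  · rintro ⟨w, h_x, h_one⟩
    have h_sum : ∑ v ∈ V, (w v : ℝ) = 1 :=
      (Finset.sum_congr rfl fun v _ => (mul_one _).symm).trans h_one
    exact ⟨fun v => w v, fun v _ => (w v).2, h_sum, h_x⟩

lemma interior_setOf_formEval_nonneg (C : IntForm ι) : ∃ D : IntForm ι,
    interior {x : ι → ℝ | 0 ≤ formEval ℝ C (x, 1)} = {x | 0 < formEval ℝ D (x, 1)} := by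
  by_cases hC : C.1 = 0
  · refine ⟨(0, C.2 + 1), ?_⟩
    have h_int : 0 ≤ (C.2 : ℝ) ↔ 0 < ((C.2 + 1 : ℤ) : ℝ) := by
      rw [Int.cast_nonneg_iff, Int.cast_pos, Int.lt_add_one_iff]
    simp only [formEval_eq_of_fst_eq_zero hC, formEval_eq_of_fst_eq_zero (C := (0, C.2 + 1)) rfl,
      mul_one, h_int, isOpen_const.interior_eq]
  · refine ⟨C, ?_⟩
    have h := (isOpenMap_formEval hC).preimage_interior_eq_interior_preimage
      (continuous_formEval C) (Set.Ici 0)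
    rw [interior_Ici] at h
    exact h.symm

lemma exists_interior_convexHull_eq_openPolytope {V : Finset (ι → ℝ)}
    (hV : ∀ v ∈ V, ∃ r : ι → ℚ, v = fun i => (r i : ℝ)) :
    ∃ Cs : Finset (IntForm ι),
      interior (convexHull ℝ (V : Set (ι → ℝ))) = openPolytope Cs (1 : ℝ) := by
  classical
  obtain ⟨Cs, hCs⟩ := exists_closedCone_eq_hull hV
  choose f hf using interior_setOf_formEval_nonneg (ι := ι)
  have h_hull : convexHull ℝ (V : Set (ι → ℝ)) =
      ⋂ C ∈ Cs, {x | 0 ≤ formEval ℝ C (x, 1)} := by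
    ext x
    rw [mem_convexHull_iff_mem_hull, ← SetLike.mem_coe, ← hCs]
    simp [closedCone]
  refine ⟨Cs.image f, Set.ext fun x => ?_⟩
  rw [h_hull, Finset.interior_iInter]
  simp only [hf, openPolytope, Finset.forall_mem_image, Set.mem_iInter, Set.mem_ofPred_eq]

lemma exists_interior_convexHull_eq_preimage_openPolytope {V : Finset (ℝ × ℝ)}
    (hV : ∀ v ∈ V, ∃ a b : ℚ, v = ((a : ℝ), (b : ℝ))) :
    ∃ Cs : Finset (IntForm (Fin 2)), Bornology.IsBounded (openPolytope Cs (1 : ℝ)) ∧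
      interior (convexHull ℝ (V : Set (ℝ × ℝ))) =
        (finTwoArrowEquiv ℝ).symm ⁻¹' openPolytope Cs (1 : ℝ) := by
  classical
  let e := (ContinuousLinearEquiv.finTwoArrow ℝ ℝ).symm
  obtain ⟨Cs, hCs⟩ := exists_interior_convexHull_eq_openPolytope (V := V.image e) (by
    simp only [Finset.forall_mem_image]
    intro v hv
    obtain ⟨a, b, rfl⟩ := hV v hv
    exact ⟨![a, b], List.ofFn_injective rfl⟩)
  refine ⟨Cs, ?_, ?_⟩
  · rw [← hCs]
    exact (isBounded_convexHull.2 (Finset.finite_toSet _).isBounded).subset interior_subset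
  have h_image : convexHull ℝ (e '' V) = e '' convexHull ℝ V :=
    (e.toLinearEquiv.toLinearMap.image_convexHull V).symm
  rw [Finset.coe_image, h_image] at hCs
  have h_int := (e.toHomeomorph.image_interior (convexHull ℝ V)).trans hCs
  change _ = e ⁻¹' _
  rw [← h_int]
  exact (Set.preimage_image_eq _ e.injective).symm

end RationalPolytope

/-! ### Nonattacking configurations and their order patterns -/

section Configuration

variable {α μ R : Type*} {q : ℕ}

/-- Labelled nonattacking configurations of `q` pieces on the board `D`, where two pieces attack
each other if one of the functions `k m` takes the same value on both. -/
def configurations (k : μ → α → R) (D : Set α) (q : ℕ) : Set (Fin q → α) :=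
  {z | (∀ i, z i ∈ D) ∧ ∀ m, Function.Injective (k m ∘ z)}

lemma comp_perm_mem_configurations {k : μ → α → R} {D : Set α} {z : Fin q → α}
    (hz : z ∈ configurations k D q) (σ : Equiv.Perm (Fin q)) : z ∘ σ ∈ configurations k D q :=
  ⟨fun i => hz.1 (σ i), fun m => (hz.2 m).comp σ.injective⟩

/-- Unlabelled nonattacking configurations of `q` pieces on the board `D`. -/
def placements (k : μ → α → R) (D : Set α) (q : ℕ) : Set (Finset α) :=
  {S | S.card = q ∧ ↑S ⊆ D ∧ ∀ m, Set.InjOn (k m) S}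

lemma ncard_placements_comp_equiv {β : Type*} (k : μ → β → R) (e : α ≃ β) (D : Set β) (q : ℕ) :
    (placements (fun m => k m ∘ e) (e ⁻¹' D) q).ncard = (placements k D q).ncard := by
  have h_preimage : placements (fun m => k m ∘ e) (e ⁻¹' D) q =
      e.finsetCongr ⁻¹' placements k D q := by
    ext S
    simp [placements, Set.InjOn, e.surjective.forall]
  rw [h_preimage, Set.ncard_preimage_of_injective_subset_range (Equiv.injective _)
    ((Equiv.range_eq_univ _).symm ▸ Set.subset_univ _)]

variable [LinearOrder R]

/-- The configurations whose pieces are labelled by increasing value of `k m₀`. -/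
def sortedConfigurations (k : μ → α → R) (m₀ : μ) (D : Set α) (q : ℕ) : Set (Fin q → α) :=
  {z ∈ configurations k D q | StrictMono (k m₀ ∘ z)}

lemma exists_perm_comp_mem_sortedConfigurations {k : μ → α → R} {D : Set α} {z : Fin q → α}
    (hz : z ∈ configurations k D q) (m₀ : μ) :
    ∃ σ : Equiv.Perm (Fin q), z ∘ σ ∈ sortedConfigurations k m₀ D q :=
  ⟨Tuple.sort (k m₀ ∘ z), comp_perm_mem_configurations hz _,
    (Tuple.monotone_sort _).strictMono_of_injective ((hz.2 m₀).comp (Equiv.injective _))⟩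

lemma exists_strictMono_comp_image_eq [DecidableEq α] {f : α → R} {S : Finset α} (hS : S.card = q)
    (hf : Set.InjOn f S) : ∃ z : Fin q → α, StrictMono (f ∘ z) ∧ Finset.univ.image z = S := by
  have h_card : (S.image f).card = q := by rw [Finset.card_image_of_injOn hf, hS]
  choose z hz hfz using fun i => Finset.mem_image.1 ((S.image f).orderEmbOfFin_mem h_card i)
  have h_mono : StrictMono (f ∘ z) := by
    convert ((S.image f).orderEmbOfFin h_card).strictMono
    exact funext hfz
  refine ⟨z, h_mono, Finset.eq_of_subset_of_card_le (Finset.image_subset_iff.2 fun i _ => hz i) ?_⟩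
  rw [Finset.card_image_of_injective _ h_mono.injective.of_comp, Finset.card_univ,
    Fintype.card_fin, hS]

lemma eq_of_strictMono_comp_of_range_eq {f : α → R} {z w : Fin q → α} (hz : StrictMono (f ∘ z))
    (hw : StrictMono (f ∘ w)) (h : Set.range z = Set.range w) : z = w := by
  have h_comp : f ∘ z = f ∘ w := by
    rw [← StrictMono.range_inj hz hw, Set.range_comp, Set.range_comp, h]
  funext i
  obtain ⟨j, hj⟩ : z i ∈ Set.range w := h ▸ Set.mem_range_self i
  have h_val : (f ∘ w) j = (f ∘ w) i := by
    rw [Function.comp_apply, hj]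
    exact congrFun h_comp i
  rw [← hj, hw.injective h_val]

lemma bijOn_image_sortedConfigurations [DecidableEq α] (k : μ → α → R) (m₀ : μ) (D : Set α) :
    Set.BijOn (fun z : Fin q → α => Finset.univ.image z) (sortedConfigurations k m₀ D q)
      (placements k D q) := by
  refine ⟨fun z ⟨⟨hzD, hz⟩, _⟩ => ⟨?_, ?_, fun m => ?_⟩, fun z hz w hw h => ?_,
    fun S ⟨h_card, hSD, hS⟩ => ?_⟩
  · simp [Finset.card_image_of_injective _ (hz m₀).of_comp]
  · simpa [Set.range_subset_iff] using hzD
  · rw [Finset.coe_image, Finset.coe_univ, Set.image_univ]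
    exact (hz m).injOn_range
  · refine eq_of_strictMono_comp_of_range_eq hz.2 hw.2 ?_
    simpa using congrArg ((↑) : Finset α → Set α) h
  · obtain ⟨z, hz, rfl⟩ := exists_strictMono_comp_image_eq h_card (hS m₀)
    simp only [Finset.coe_image, Finset.coe_univ, Set.image_univ] at hSD hS
    refine ⟨z, ⟨⟨Set.range_subset_iff.1 hSD, fun m => ?_⟩, hz⟩, rfl⟩
    exact fun i j hij => hz.injective.of_comp (hS m ⟨i, rfl⟩ ⟨j, rfl⟩ hij)

variable [Fintype μ]

/-- The order pattern of a configuration: all `(i, j, m)` for which the value of `k m` on the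
`i`-th piece is smaller than on the `j`-th. -/
def pattern (k : μ → α → R) (z : Fin q → α) : Finset (Fin q × Fin q × μ) :=
  Finset.univ.filter fun τ => k τ.2.2 (z τ.1) < k τ.2.2 (z τ.2.1)

lemma mem_pattern {k : μ → α → R} {z : Fin q → α} {i j : Fin q} {m : μ} :
    (i, j, m) ∈ pattern k z ↔ k m (z i) < k m (z j) := by
  simp [pattern]

lemma pattern_comp_eq_of_pattern_eq {k : μ → α → R} {z w : Fin q → α}
    (h : pattern k z = pattern k w) (σ : Fin q → Fin q) :
    pattern k (z ∘ σ) = pattern k (w ∘ σ) := by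
  ext ⟨i, j, m⟩
  simp only [mem_pattern, Function.comp_apply]
  rw [← mem_pattern, h, mem_pattern]

/-- The configurations with order pattern `ε`. -/
def cell (k : μ → α → R) (D : Set α) (ε : Finset (Fin q × Fin q × μ)) : Set (Fin q → α) :=
  {z ∈ configurations k D q | pattern k z = ε}

lemma mem_cell_iff {k : μ → α → R} {D : Set α} {ε : Finset (Fin q × Fin q × μ)} {z : Fin q → α} :
    z ∈ cell k D ε ↔ (∀ i, z i ∈ D) ∧ (∀ i j m, (i, j, m) ∈ ε → k m (z i) < k m (z j)) ∧
      ∀ i j m, (i, j, m) ∉ ε → i ≠ j → k m (z j) < k m (z i) := by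
  constructor
  · rintro ⟨⟨hzD, hz⟩, rfl⟩
    refine ⟨hzD, fun i j m => mem_pattern.1, fun i j m h_notMem hij => ?_⟩
    exact (not_lt.1 (mem_pattern.not.1 h_notMem)).lt_of_ne ((hz m).ne hij.symm)
  · rintro ⟨hzD, h_mem, h_notMem⟩
    refine ⟨⟨hzD, fun m => ?_⟩, ?_⟩
    · refine Function.injective_iff_pairwise_ne.2 fun i j hij => ?_
      by_cases h : (i, j, m) ∈ ε
      exacts [(h_mem i j m h).ne, (h_notMem i j m h hij).ne']
    · ext ⟨i, j, m⟩
      refine mem_pattern.trans ⟨fun h_lt => ?_, h_mem i j m⟩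
      by_contra h
      have hij : i ≠ j := by
        rintro rfl
        exact h_lt.false
      exact h_lt.not_gt (h_notMem i j m h hij)

lemma cell_comp {β : Type*} (k : μ → β → R) (e : α → β) (D : Set β)
    (ε : Finset (Fin q × Fin q × μ)) :
    cell (fun m => k m ∘ e) (e ⁻¹' D) ε = (e ∘ ·) ⁻¹' cell k D ε :=
  rfl

open Classical in
/-- The candidates for order patterns of configurations labelled by increasing value of `k m₀`. -/
noncomputable def sortedPatterns (q : ℕ) (m₀ : μ) : Finset (Finset (Fin q × Fin q × μ)) :=
  Finset.univ.filter fun ε => ∀ i j, i < j → (i, j, m₀) ∈ ε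

lemma pattern_mem_sortedPatterns_iff {k : μ → α → R} {m₀ : μ} {z : Fin q → α} :
    pattern k z ∈ sortedPatterns q m₀ ↔ StrictMono (k m₀ ∘ z) := by
  simp only [sortedPatterns, Finset.mem_filter, Finset.mem_univ, true_and, mem_pattern]
  rfl

lemma ncard_placements_eq_sum_ncard_cell (k : μ → α → R) (m₀ : μ) {D : Set α} (hD : D.Finite) :
    (placements k D q).ncard = ∑ ε ∈ sortedPatterns q m₀, (cell k D ε).ncard := by
  classical
  have h_fin : (sortedConfigurations k m₀ D q).Finite :=
    (Set.Finite.pi' fun _ => hD).subset fun z hz => hz.1.1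
  have h_maps (z : Fin q → α) (hz : z ∈ h_fin.toFinset) : pattern k z ∈ sortedPatterns q m₀ :=
    pattern_mem_sortedPatterns_iff.2 (h_fin.mem_toFinset.1 hz).2
  rw [← (bijOn_image_sortedConfigurations k m₀ D).ncard_eq, Set.ncard_eq_toFinset_card _ h_fin,
    Finset.card_eq_sum_card_fiberwise h_maps]
  refine Finset.sum_congr rfl fun ε hε => ?_
  rw [← Set.ncard_coe_finset]
  congr 1
  ext z
  simp only [Finset.coe_filter, Set.Finite.mem_toFinset, Set.mem_ofPred_eq, sortedConfigurations,
    cell]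
  refine ⟨fun h => ⟨h.1.1, h.2⟩, fun h => ⟨⟨h.1, ?_⟩, h.2⟩⟩
  rwa [← pattern_mem_sortedPatterns_iff, h.2]

end Configuration

section Components

lemma ncard_image_eq_ncard_image {α β γ : Type*} {s : Set α} {f : α → β} {g : α → γ}
    (h : ∀ x ∈ s, ∀ y ∈ s, f x = f y ↔ g x = g y) : (f '' s).ncard = (g '' s).ncard := by
  obtain ⟨t, hts, h_inj, h_image⟩ := (Set.surjOn_image f s).exists_subset_injOn_image_eq
  have h_image' : g '' t = g '' s := by
    refine Set.Subset.antisymm (Set.image_mono hts) ?_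
    rintro _ ⟨x, hx, rfl⟩
    obtain ⟨y, hy, hyx⟩ : f x ∈ f '' t := h_image ▸ Set.mem_image_of_mem f hx
    exact ⟨y, hy, (h y (hts hy) x hx).1 hyx⟩
  rw [← h_image, ← h_image', h_inj.ncard_image, Set.InjOn.ncard_image]
  exact fun x hx y hy hxy => h_inj hx hy ((h x (hts hx) y (hts hy)).2 hxy)

variable {E μ : Type*} [Fintype μ] {q : ℕ} {k : μ → E → ℝ} {U : Set E}

lemma convex_cell [AddCommGroup E] [Module ℝ E] (hk : ∀ m, IsLinearMap ℝ (k m))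
    (hU : Convex ℝ U) (ε : Finset (Fin q × Fin q × μ)) : Convex ℝ (cell k U ε) := by
  have h_lt (i j : Fin q) (m : μ) : Convex ℝ {z : Fin q → E | k m (z i) < k m (z j)} := by
    simp_rw [← sub_neg (b := k m _)]
    refine convex_halfSpace_lt ⟨fun z w => ?_, fun c z => ?_⟩ 0
    · simp only [Pi.add_apply, (hk m).map_add]
      ring
    · simp only [Pi.smul_apply, (hk m).map_smul, smul_sub]
  have h_cell : cell k U ε = (⋂ i, (fun z => z i) ⁻¹' U) ∩
      ((⋂ (i) (j) (m) (_ : (i, j, m) ∈ ε), {z | k m (z i) < k m (z j)}) ∩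
        ⋂ (i) (j) (m) (_ : (i, j, m) ∉ ε) (_ : i ≠ j), {z | k m (z j) < k m (z i)}) := by
    ext z
    simp only [mem_cell_iff, Set.mem_inter_iff, Set.mem_iInter, Set.mem_preimage,
      Set.mem_ofPred_eq]
  rw [h_cell]
  exact (convex_iInter fun i => hU.linear_preimage (LinearMap.proj i)).inter <|
    (convex_iInter fun i => convex_iInter fun j => convex_iInter fun m =>
      convex_iInter fun _ => h_lt i j m).inter <|
    convex_iInter fun i => convex_iInter fun j => convex_iInter fun m =>
      convex_iInter fun _ => convex_iInter fun _ => h_lt j i m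

variable [TopologicalSpace E]

lemma pattern_eq_of_isPreconnected (hk : ∀ m, Continuous (k m)) {s : Set (Fin q → E)}
    (hs : IsPreconnected s) (h_subset : s ⊆ configurations k U q) {z w : Fin q → E}
    (hz : z ∈ s) (hw : w ∈ s) : pattern k z = pattern k w := by
  have h_imp {z w : Fin q → E} (hz : z ∈ s) (hw : w ∈ s) {i j : Fin q} {m : μ}
      (h_lt : k m (z i) < k m (z j)) : k m (w i) < k m (w j) := by
    have h_cont (i : Fin q) : ContinuousOn (fun x : Fin q → E => k m (x i)) s :=
      ((hk m).comp (continuous_apply i)).continuousOn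
    by_contra! h_ge
    obtain ⟨x, hx, hx_eq⟩ := hs.intermediate_value₂ hz hw (h_cont i) (h_cont j) h_lt.le h_ge
    have hij : i = j := (h_subset hx).2 m hx_eq
    exact h_lt.ne (by rw [hij])
  ext ⟨i, j, m⟩
  exact mem_pattern.trans (Iff.trans ⟨h_imp hz hw, h_imp hw hz⟩ mem_pattern.symm)

/-- The orbit of the connected component of `z` under permutations of the pieces. -/
def componentOrbit (Ω : Set (Fin q → E)) (z : Fin q → E) : Set (Set (Fin q → E)) :=
  {C | ∃ σ : Equiv.Perm (Fin q), C = connectedComponentIn Ω (z ∘ σ)}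

lemma componentOrbit_comp_perm (Ω : Set (Fin q → E)) (z : Fin q → E) (σ : Equiv.Perm (Fin q)) :
    componentOrbit Ω (z ∘ σ) = componentOrbit Ω z := by
  ext C
  refine ⟨fun ⟨ρ, hρ⟩ => ⟨σ * ρ, hρ⟩, fun ⟨ρ, hρ⟩ => ⟨σ⁻¹ * ρ, ?_⟩⟩
  rw [hρ, Function.comp_assoc, ← Equiv.Perm.coe_mul, mul_inv_cancel_left]

lemma image_componentOrbit_sortedConfigurations {μ : Type*} (k : μ → E → ℝ) (m₀ : μ) (U : Set E)
    (q : ℕ) :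
    componentOrbit (configurations k U q) '' sortedConfigurations k m₀ U q =
      componentOrbit (configurations k U q) '' configurations k U q := by
  refine Set.Subset.antisymm (Set.image_mono fun z hz => hz.1) ?_
  rintro _ ⟨z, hz, rfl⟩
  obtain ⟨σ, hσ⟩ := exists_perm_comp_mem_sortedConfigurations hz m₀
  exact ⟨z ∘ σ, hσ, componentOrbit_comp_perm _ z σ⟩

variable [AddCommGroup E] [Module ℝ E] [ContinuousAdd E] [ContinuousSMul ℝ E]

lemma connectedComponentIn_configurations (hk : ∀ m, IsLinearMap ℝ (k m))
    (hk_cont : ∀ m, Continuous (k m)) (hU : Convex ℝ U) {z : Fin q → E}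
    (hz : z ∈ configurations k U q) :
    connectedComponentIn (configurations k U q) z = cell k U (pattern k z) := by
  have h_subset := connectedComponentIn_subset (configurations k U q) z
  refine Set.Subset.antisymm (fun w hw => ⟨h_subset hw, ?_⟩) ?_
  · exact pattern_eq_of_isPreconnected hk_cont isPreconnected_connectedComponentIn h_subset hw
      (mem_connectedComponentIn hz)
  · exact (convex_cell hk hU _).isPreconnected.subset_connectedComponentIn ⟨hz, rfl⟩
      fun w hw => hw.1

lemma componentOrbit_eq_iff_pattern_eq (hk : ∀ m, IsLinearMap ℝ (k m))
    (hk_cont : ∀ m, Continuous (k m)) (hU : Convex ℝ U) {m₀ : μ} {z w : Fin q → E}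
    (hz : z ∈ sortedConfigurations k m₀ U q) (hw : w ∈ sortedConfigurations k m₀ U q) :
    componentOrbit (configurations k U q) z = componentOrbit (configurations k U q) w ↔
      pattern k z = pattern k w := by
  have h_component {x : Fin q → E} (hx : x ∈ sortedConfigurations k m₀ U q)
      (σ : Equiv.Perm (Fin q)) : connectedComponentIn (configurations k U q) (x ∘ σ) =
        cell k U (pattern k (x ∘ σ)) :=
    connectedComponentIn_configurations hk hk_cont hU (comp_perm_mem_configurations hx.1 σ)
  constructor
  · intro h
    obtain ⟨σ, hσ⟩ : connectedComponentIn (configurations k U q) z ∈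
        componentOrbit (configurations k U q) w := h ▸ ⟨1, rfl⟩
    have h_pattern : pattern k z = pattern k (w ∘ σ) := by
      rw [h_component hw σ] at hσ
      exact (hσ ▸ mem_connectedComponentIn hz.1).2
    have h_sorted : StrictMono (k m₀ ∘ w ∘ σ) := by
      rw [← pattern_mem_sortedPatterns_iff, ← h_pattern]
      exact pattern_mem_sortedPatterns_iff.2 hz.2
    rw [h_pattern, eq_of_strictMono_comp_of_range_eq h_sorted hw.2 (σ.surjective.range_comp w)]
  · intro h
    simp only [componentOrbit, h_component hz, h_component hw, pattern_comp_eq_of_pattern_eq h]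

open Classical in
theorem ncard_image_componentOrbit (hk : ∀ m, IsLinearMap ℝ (k m))
    (hk_cont : ∀ m, Continuous (k m)) (hU : Convex ℝ U) (m₀ : μ) :
    (componentOrbit (configurations k U q) '' configurations k U q).ncard =
      {ε ∈ sortedPatterns q m₀ | (cell k U ε).Nonempty}.card := by
  rw [← image_componentOrbit_sortedConfigurations k m₀, ncard_image_eq_ncard_image fun z hz w hw =>
    componentOrbit_eq_iff_pattern_eq hk hk_cont hU hz hw, ← Set.ncard_coe_finset]
  congr 1
  ext ε
  simp only [Finset.coe_filter, Set.mem_image, Set.mem_ofPred_eq]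
  constructor
  · rintro ⟨z, hz, rfl⟩
    exact ⟨pattern_mem_sortedPatterns_iff.2 hz.2, z, hz.1, rfl⟩
  · rintro ⟨hε, z, hz, rfl⟩
    exact ⟨z, ⟨hz, pattern_mem_sortedPatterns_iff.1 hε⟩, rfl⟩

lemma ncard_image_componentOrbit_comp_equiv {μ : Type*} [Finite μ] {k : μ → E → ℝ} {F : Type*}
    [AddCommGroup F] [Module ℝ F] [TopologicalSpace F] [ContinuousAdd F] [ContinuousSMul ℝ F]
    (e : F ≃L[ℝ] E) (hk : ∀ m, IsLinearMap ℝ (k m)) (hk_cont : ∀ m, Continuous (k m))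
    (hU : Convex ℝ U) (m₀ : μ) :
    (componentOrbit (configurations (fun m => k m ∘ e) (e ⁻¹' U) q) ''
        configurations (fun m => k m ∘ e) (e ⁻¹' U) q).ncard =
      (componentOrbit (configurations k U q) '' configurations k U q).ncard := by
  classical
  cases nonempty_fintype μ
  have hk_comp (m : μ) : IsLinearMap ℝ (k m ∘ e) := ((hk m).mk' _ ∘ₗ e.toLinearMap).isLinear
  have hU_comp : Convex ℝ (e ⁻¹' U) := hU.linear_preimage e.toLinearMap
  rw [ncard_image_componentOrbit hk hk_cont hU m₀, ncard_image_componentOrbit hk_comp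
    (fun m => (hk_cont m).comp e.continuous) hU_comp m₀]
  refine congrArg Finset.card (Finset.filter_congr fun ε _ => ?_)
  rw [cell_comp]
  exact (Function.Surjective.comp_left e.surjective).nonempty_preimage

end Components

/-! ### Counting nonattacking configurations in an open polytope -/

section CellForms

variable {ι : Type*} [Fintype ι] {R : Type*}

variable (R) in
/-- The linear functional with integral coefficients `a`; pieces attack along its level sets. -/
def attackForm [CommRing R] (a : ι → ℤ) : (ι → R) →ₗ[R] R :=
  formEval R (a, 0) ∘ₗ LinearMap.inl R (ι → R) R

/-- The integral form on `q`-tuples of points given by a form in the `i`-th point. -/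
def placeForm {κ : Type*} [DecidableEq κ] (i : κ) (C : IntForm ι) : IntForm (κ × ι) :=
  (fun p => if p.1 = i then C.1 p.2 else 0, C.2)

lemma formEval_placeForm [CommRing R] {κ : Type*} [Fintype κ] [DecidableEq κ] (i : κ)
    (C : IntForm ι) (x : κ × ι → R) (t : R) :
    formEval R (placeForm i C) (x, t) = formEval R C (Function.curry x i, t) := by
  simp [formEval_apply, placeForm, Fintype.sum_prod_type]

lemma attackForm_eq_formEval [CommRing R] (a : ι → ℤ) (x : ι → R) (t : R) :
    attackForm R a x = formEval R (a, 0) (x, t) := by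
  simp [attackForm, formEval_apply]

variable {μ : Type*} [Fintype μ] {q : ℕ}

open Classical in
/-- Integral forms whose positivity says that the `q` pieces lie in the open polytope `P` and have
order pattern `ε`. -/
noncomputable def cellForms (a : μ → ι → ℤ) (P : Finset (IntForm ι))
    (ε : Finset (Fin q × Fin q × μ)) : Finset (IntForm (Fin q × ι)) :=
  Finset.image₂ placeForm Finset.univ P ∪
    ε.image (fun τ => placeForm τ.2.1 (a τ.2.2, 0) - placeForm τ.1 (a τ.2.2, 0)) ∪
    {τ ∈ εᶜ | τ.1 ≠ τ.2.1}.image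
      fun τ => placeForm τ.1 (a τ.2.2, 0) - placeForm τ.2.1 (a τ.2.2, 0)

lemma openPolytope_cellForms [CommRing R] [LinearOrder R] [IsStrictOrderedRing R]
    (a : μ → ι → ℤ) (P : Finset (IntForm ι)) (ε : Finset (Fin q × Fin q × μ)) (t : R) :
    openPolytope (cellForms a P ε) t =
      Equiv.curry (Fin q) ι R ⁻¹' cell (fun m => attackForm R (a m)) (openPolytope P t) ε := by
  ext x
  simp only [openPolytope, cellForms, Set.mem_preimage, mem_cell_iff, Set.mem_ofPred_eq,
    attackForm_eq_formEval _ _ t, Finset.mem_union, or_imp, forall_and, Finset.forall_mem_image,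
    Finset.forall_mem_image₂, map_sub, LinearMap.sub_apply, sub_pos, formEval_placeForm,
    Finset.mem_univ, forall_const, Finset.mem_filter, Finset.mem_compl, Prod.forall, and_imp,
    Equiv.curry_apply, and_assoc]

lemma isBounded_openPolytope_cellForms {P : Finset (IntForm ι)} (a : μ → ι → ℤ)
    (hP : Bornology.IsBounded (openPolytope P (1 : ℝ))) (ε : Finset (Fin q × Fin q × μ)) :
    Bornology.IsBounded (openPolytope (cellForms a P ε) (1 : ℝ)) := by
  obtain ⟨b, hb_pos, hb⟩ := hP.exists_pos_norm_le
  refine isBounded_iff_forall_norm_le.2 ⟨b, fun x hx => (pi_norm_le_iff_of_nonneg hb_pos.le).2 ?_⟩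
  rw [openPolytope_cellForms] at hx
  rintro ⟨i, j⟩
  exact (norm_le_pi_norm (Function.curry x i) j).trans (hb _ (hx.1.1 i))

theorem exists_quasiPolynomial_ncard_cell {P : Finset (IntForm ι)} (a : μ → ι → ℤ)
    (hP : Bornology.IsBounded (openPolytope P (1 : ℝ))) (ε : Finset (Fin q × Fin q × μ)) :
    ∃ W ∈ quasiPolynomial ℤ,
      (∀ t : ℤ, 1 ≤ t →
        ((cell (fun m => attackForm ℤ (a m)) (openPolytope P t) ε).ncard : ℚ) = W t) ∧
      W 0 = openEuler (q * Fintype.card ι)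
        (cell (fun m => attackForm ℝ (a m)) (openPolytope P (1 : ℝ)) ε) := by
  obtain ⟨W, hW, hW_count, hW_zero⟩ := exists_quasiPolynomial_ncard_openPolytope (cellForms a P ε)
    (isBounded_openPolytope_cellForms a hP ε)
  refine ⟨W, hW, fun t ht => ?_, ?_⟩
  · rw [← hW_count t ht, openPolytope_cellForms, Set.ncard_preimage_of_injective_subset_range
      (Equiv.injective _) ((Equiv.range_eq_univ _).symm ▸ Set.subset_univ _)]
  · rw [hW_zero, openPolytope_cellForms, Fintype.card_prod, Fintype.card_fin]
    exact openEuler_congr _ (Equiv.surjective _).nonempty_preimage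

theorem exists_quasiPolynomial_ncard_placements {μ : Type*} [Finite μ] {P : Finset (IntForm ι)}
    (a : μ → ι → ℤ) (hP : Bornology.IsBounded (openPolytope P (1 : ℝ))) (m₀ : μ) (q : ℕ)
    {Ω : Set (Fin q → ι → ℝ)}
    (hΩ : Ω = configurations (fun m => attackForm ℝ (a m)) (openPolytope P (1 : ℝ)) q) :
    ∃ W ∈ quasiPolynomial ℤ,
      (∀ t : ℤ, 1 ≤ t →
        ((placements (fun m => attackForm ℤ (a m)) (openPolytope P t) q).ncard : ℚ) = W t) ∧
      W 0 = (-1) ^ (q * Fintype.card ι) * (componentOrbit Ω '' Ω).ncard := by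
  classical
  cases nonempty_fintype μ
  choose W hW hW_count hW_zero using exists_quasiPolynomial_ncard_cell (q := q) a hP
  refine ⟨∑ ε ∈ sortedPatterns q m₀, W ε, sum_mem fun ε _ => hW ε, fun t ht => ?_, ?_⟩
  · rw [ncard_placements_eq_sum_ncard_cell _ m₀ (finite_openPolytope hP ht), Nat.cast_sum,
      Finset.sum_apply]
    exact Finset.sum_congr rfl fun ε _ => hW_count ε t ht
  · rw [hΩ, ncard_image_componentOrbit (fun m => (attackForm ℝ (a m)).isLinear)
      (fun m => (attackForm ℝ (a m)).continuous_of_finiteDimensional) (convex_openPolytope P) m₀,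
      Finset.sum_apply, ← Finset.sum_boole, Finset.mul_sum]
    refine Finset.sum_congr rfl fun ε _ => ?_
    rw [hW_zero, openEuler, mul_ite, mul_one, mul_zero]

end CellForms

/-! ### Pieces on a planar board -/

section Planar

variable (R : Type*) [CommRing R]

/-- Two points of the plane lie on a line with direction `m` if and only if `attackKey R m` takes
the same value on both. -/
def attackKey (m : ℤ × ℤ) (z : R × R) : R :=
  z.1 * m.2 - z.2 * m.1

lemma attackKey_eq_attackForm_comp (m : ℤ × ℤ) :
    attackKey R m = attackForm R ![m.2, -m.1] ∘ (finTwoArrowEquiv R).symm := by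
  ext z
  simp [attackKey, attackForm, formEval_apply]
  ring

variable {R}

lemma configurations_attackKey (M : Finset (ℤ × ℤ)) (D : Set (R × R)) (q : ℕ) :
    configurations (fun m : M => attackKey R m) D q = {z | (∀ i, z i ∈ D) ∧
      ∀ i j, i ≠ j → ∀ m ∈ M,
        ((z j).1 - (z i).1) * (m.2 : R) - ((z j).2 - (z i).2) * (m.1 : R) ≠ 0} := by
  ext z
  refine and_congr_right fun _ => ⟨fun h i j hij m hm h_zero => hij (h ⟨m, hm⟩ ?_),
    fun h m i j h_eq => ?_⟩
  · simp only [Function.comp_apply, attackKey]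
    linear_combination -h_zero
  · by_contra hij
    simp only [Function.comp_apply, attackKey] at h_eq
    exact h i j hij m m.2 (by linear_combination -h_eq)

lemma placements_attackKey (M : Finset (ℤ × ℤ)) (D : Set (ℤ × ℤ)) (q : ℕ) :
    placements (fun m : M => attackKey ℤ m) D q = {S | S.card = q ∧ (∀ z ∈ S, z ∈ D) ∧
      ∀ z ∈ S, ∀ w ∈ S, z ≠ w → ∀ m ∈ M, (z.1 - w.1) * m.2 - (z.2 - w.2) * m.1 ≠ 0} := by
  ext S
  refine and_congr_right fun _ => and_congr_right fun _ =>
    ⟨fun h z hz w hw hzw m hm h_zero => hzw (h ⟨m, hm⟩ hz hw ?_), fun h m z hz w hw h_eq => ?_⟩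
  · simp only [attackKey, Int.cast_id]
    linear_combination h_zero
  · by_contra hzw
    simp only [attackKey, Int.cast_id] at h_eq
    exact h z hz w hw hzw m m.2 (by linear_combination h_eq)

lemma intCast_mem_smul_preimage_openPolytope_iff {P : Finset (IntForm (Fin 2))} {z : ℤ × ℤ}
    {t : ℤ} (ht : 1 ≤ t) :
    ((z.1 : ℝ), (z.2 : ℝ)) ∈ (t : ℝ) • ((finTwoArrowEquiv ℝ).symm ⁻¹' openPolytope P (1 : ℝ)) ↔
      (finTwoArrowEquiv ℤ).symm z ∈ openPolytope P t := by
  have ht' : (t : ℝ) ≠ 0 := by exact_mod_cast (by omega : t ≠ 0)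
  rw [Set.mem_smul_set_iff_inv_smul_mem₀ ht', ← inv_smul_intCast_mem_openPolytope_iff ht,
    Set.mem_preimage]
  congr! 1
  exact List.ofFn_injective rfl

theorem exists_quasiPolynomial_ncard_planar_placements {V : Finset (ℝ × ℝ)}
    (hV : ∀ v ∈ V, ∃ a b : ℚ, v = ((a : ℝ), (b : ℝ))) {M : Finset (ℤ × ℤ)} (hM : M.Nonempty)
    {q : ℕ} {U : Set (ℝ × ℝ)} (hU : U = interior (convexHull ℝ (V : Set (ℝ × ℝ))))
    {Ω : Set (Fin q → ℝ × ℝ)} (hΩ : Ω = configurations (fun m : M => attackKey ℝ m) U q) :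
    ∃ W ∈ quasiPolynomial ℤ,
      (∀ t : ℤ, 1 ≤ t → ((placements (fun m : M => attackKey ℤ m)
        {z | ((z.1 : ℝ), (z.2 : ℝ)) ∈ (t : ℝ) • U} q).ncard : ℚ) = W t) ∧
      W 0 = (componentOrbit Ω '' Ω).ncard := by
  obtain ⟨m₀, hm₀⟩ := hM
  obtain ⟨P, hP, hP_eq⟩ := exists_interior_convexHull_eq_preimage_openPolytope hV
  obtain ⟨W, hW, hW_count, hW_zero⟩ := exists_quasiPolynomial_ncard_placements
    (fun m : M => ![m.1.2, -m.1.1]) hP ⟨m₀, hm₀⟩ q rfl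
  refine ⟨W, hW, fun t ht => ?_, ?_⟩
  · have h_board : {z : ℤ × ℤ | ((z.1 : ℝ), (z.2 : ℝ)) ∈ (t : ℝ) • U} =
        (finTwoArrowEquiv ℤ).symm ⁻¹' openPolytope P t := by
      ext z
      rw [hU, hP_eq]
      exact intCast_mem_smul_preimage_openPolytope_iff ht
    simp_rw [h_board, attackKey_eq_attackForm_comp]
    rw [ncard_placements_comp_equiv (fun m : M => attackForm ℤ ![m.1.2, -m.1.1]), hW_count t ht]
  · simp_rw [hΩ, hU, hP_eq, attackKey_eq_attackForm_comp]
    rw [hW_zero, Fintype.card_fin, pow_mul', neg_one_sq, one_pow, one_mul]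
    exact congrArg Nat.cast (ncard_image_componentOrbit_comp_equiv
      (ContinuousLinearEquiv.finTwoArrow ℝ ℝ).symm (fun m => (attackForm ℝ _).isLinear)
      (fun m => (attackForm ℝ _).continuous_of_finiteDimensional) (convex_openPolytope P)
      ⟨m₀, hm₀⟩).symm

end Planar

end NonattackingPieces

open NonattackingPieces in
theorem stmt_9_general
    (M : Finset (ℤ × ℤ)) (hM : M.Nonempty)
    (V : Finset (ℝ × ℝ)) (hV : ∀ v ∈ V, ∃ a b : ℚ, v = ((a : ℝ), (b : ℝ)))
    (q p : ℕ) (hp : 0 < p) (g : ℕ → Polynomial ℚ)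
    (hg : ∀ n : ℕ, (Set.ncard {S : Finset (ℤ × ℤ) |
      S.card = q ∧
      (∀ z ∈ S, (((z.1 : ℝ), (z.2 : ℝ)) : ℝ × ℝ) ∈
        ((n : ℝ) + 1) • interior (convexHull ℝ (V : Set (ℝ × ℝ)))) ∧
      (∀ z ∈ S, ∀ w ∈ S, z ≠ w → ∀ m ∈ M,
        (z.1 - w.1) * m.2 - (z.2 - w.2) * m.1 ≠ 0)} : ℚ) = (g (n % p)).eval (n : ℚ)) :
    let Ω := {z : Fin q → ℝ × ℝ | (∀ i, z i ∈ interior (convexHull ℝ (V : Set (ℝ × ℝ)))) ∧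
      ∀ i j, i ≠ j → ∀ m ∈ M,
        ((z j).1 - (z i).1) * (m.2 : ℝ) - ((z j).2 - (z i).2) * (m.1 : ℝ) ≠ 0}
    (Set.ncard {O : Set (Set (Fin q → ℝ × ℝ)) | ∃ z ∈ Ω,
        O = {C : Set (Fin q → ℝ × ℝ) | ∃ σ : Equiv.Perm (Fin q),
          C = connectedComponentIn Ω (fun i => z (σ i))}} : ℚ)
      = (g (p - 1)).eval (-1) := by
  intro Ω
  obtain ⟨W, hW, hW_count, hW_zero⟩ := exists_quasiPolynomial_ncard_planar_placements hV hM rfl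
    (configurations_attackKey M _ q).symm
  have h_orbits : {O | ∃ z ∈ Ω, O = componentOrbit Ω z} = componentOrbit Ω '' Ω := by
    simp only [Set.image, eq_comm]
  have hWg (n : ℕ) : W (n + 1) = (g (n % p)).eval (n : ℚ) := by
    rw [← hg n, ← hW_count _ (by omega), placements_attackKey]
    push_cast
    rfl
  rw [← quasiPolynomial_apply_zero_eq_eval_neg_one hW hp hWg, hW_zero, ← h_orbits]
  rfl

/-- the number of `S_q`-orbits of connected components of
`(B°)^q \ ⋃A_P^q` (unlabelled nonattacking configuration types) equals the value at
`n = -1` of the constituent of `u_P(q;n)` corresponding to `n ≡ -1 (mod p)`. -/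
theorem stmt_9
    (M : Finset (ℤ × ℤ)) (hMne : M.Nonempty)
    (hMmove : ∀ m ∈ M, m ≠ 0 ∧ Int.gcd m.1 m.2 = 1)
    (hMpar : ∀ m ∈ M, ∀ m' ∈ M, m ≠ m' → m.1 * m'.2 - m.2 * m'.1 ≠ 0)
    (V : Finset (ℝ × ℝ)) (hV : ∀ v ∈ V, ∃ a b : ℚ, v = ((a : ℝ), (b : ℝ)))
    (B : Set (ℝ × ℝ)) (hB : B = convexHull ℝ (V : Set (ℝ × ℝ)))
    (hBint : (interior B).Nonempty)
    (q : ℕ) (hq : 0 < q)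
    (u : ℕ → ℕ)
    (hu : ∀ n : ℕ, u n = Set.ncard {S : Finset (ℤ × ℤ) |
      S.card = q ∧
      (∀ z ∈ S, (((z.1 : ℝ), (z.2 : ℝ)) : ℝ × ℝ) ∈ ((n : ℝ) + 1) • interior B) ∧
      (∀ z ∈ S, ∀ w ∈ S, z ≠ w → ∀ m ∈ M,
        (z.1 - w.1) * m.2 - (z.2 - w.2) * m.1 ≠ 0)})
    (Ω : Set (Fin q → ℝ × ℝ))
    (hΩ : Ω = {z : Fin q → ℝ × ℝ | (∀ i : Fin q, z i ∈ interior B) ∧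
      ∀ i j : Fin q, i ≠ j → ∀ m ∈ M,
        ((z j).1 - (z i).1) * (m.2 : ℝ) - ((z j).2 - (z i).2) * (m.1 : ℝ) ≠ 0})
    (p : ℕ) (hp : 0 < p)
    (g : ℕ → Polynomial ℚ)
    (hg : ∀ n : ℕ, (u n : ℚ) = (g (n % p)).eval (n : ℚ)) :
    (Set.ncard {O : Set (Set (Fin q → ℝ × ℝ)) | ∃ z ∈ Ω,
        O = {C : Set (Fin q → ℝ × ℝ) | ∃ σ : Equiv.Perm (Fin q),
          C = connectedComponentIn Ω (fun i => z (σ i))}} : ℚ)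
      = (g (p - 1)).eval (-1) := by
  subst hB hΩ
  exact stmt_9_general M hMne V hV q p hp g fun n => by rw [← hu, hg]
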